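/- arXiv:1803.10337 — 2 statements merged into one kernel-verified Lean document; each statement's English description precedes it below -/
import Mathlib

section
/- M has the Weak Lefschetz Property: there exists a linear form L ∈ R_1 such that the multiplication map ×L : M_d → M_{d+1} is injective or surjective for every integer d. -/
open MvPolynomial

noncomputable section

variable {K : Type*} [Field K]

/-- `p` is homogeneous of (integer) degree `d`; for `d < 0` this forces `p = 0`. -/
def homog (p : MvPolynomial (Fin 3) K) (d : ℤ) : Prop :=
  IsWeightedHomogeneous (fun _ : Fin 3 => (1 : ℤ)) p d

/-- The degree-`d` graded piece of `⊕_{i=1}^{N} R(-a i)`, as a `K`-subspace of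
`Fin N → R`, `R = K[x,y,z]`. -/
def degPiece (N : ℕ) (a : Fin N → ℤ) (d : ℤ) :
    Submodule K (Fin N → MvPolynomial (Fin 3) K) :=
  Submodule.pi Set.univ fun i =>
    weightedHomogeneousSubmodule K (fun _ : Fin 3 => (1 : ℤ)) (d - a i)

lemma mem_degPiece {N : ℕ} {a : Fin N → ℤ} {d : ℤ} {v : Fin N → MvPolynomial (Fin 3) K} :
    v ∈ degPiece (K := K) N a d ↔ ∀ i, homog (v i) (d - a i) := by
  simp [degPiece, Submodule.mem_pi, mem_weightedHomogeneousSubmodule, homog]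

/-- The map `φ : ⊕ R(-a i) → ⊕ R(-b j)` given by the matrix `Φ`, as a `K`-linear map. -/
def phiK (n : ℕ) (Φ : Matrix (Fin n) (Fin (n + 2)) (MvPolynomial (Fin 3) K)) :
    (Fin (n + 2) → MvPolynomial (Fin 3) K) →ₗ[K] (Fin n → MvPolynomial (Fin 3) K) :=
  (Matrix.mulVecLin Φ).restrictScalars K

/-- The degree-`d` graded piece of `N = ker φ`. -/
def Nd (n : ℕ) (a : Fin (n + 2) → ℤ) (Φ : Matrix (Fin n) (Fin (n + 2)) (MvPolynomial (Fin 3) K))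
    (d : ℤ) : Submodule K (Fin (n + 2) → MvPolynomial (Fin 3) K) :=
  degPiece (n + 2) a d ⊓ LinearMap.ker (phiK n Φ)

/-- The image of the degree-`d` piece of `F` inside the degree-`d` piece of `G`,
viewed as a subspace of the latter. -/
def MdSub (n : ℕ) (a : Fin (n + 2) → ℤ) (b : Fin n → ℤ)
    (Φ : Matrix (Fin n) (Fin (n + 2)) (MvPolynomial (Fin 3) K)) (d : ℤ) :
    Submodule K ↥(degPiece (K := K) n b d) :=
  Submodule.comap (degPiece (K := K) n b d).subtype
    (Submodule.map (phiK n Φ) (degPiece (n + 2) a d))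

/-- The degree-`d` graded piece of `M = coker φ`. -/
abbrev Md (n : ℕ) (a : Fin (n + 2) → ℤ) (b : Fin n → ℤ)
    (Φ : Matrix (Fin n) (Fin (n + 2)) (MvPolynomial (Fin 3) K)) (d : ℤ) :=
  ↥(degPiece (K := K) n b d) ⧸ MdSub n a b Φ d

/-- Multiplication by `L` on tuples of polynomials, as a `K`-linear map. -/
def mulL (N : ℕ) (L : MvPolynomial (Fin 3) K) :
    (Fin N → MvPolynomial (Fin 3) K) →ₗ[K] (Fin N → MvPolynomial (Fin 3) K) :=
  ((LinearMap.lsmul (MvPolynomial (Fin 3) K) (Fin N → MvPolynomial (Fin 3) K)) L).restrictScalars K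

lemma mulL_apply {N : ℕ} (L : MvPolynomial (Fin 3) K) (v : Fin N → MvPolynomial (Fin 3) K) :
    mulL N L v = L • v := rfl

lemma mulL_mem {N : ℕ} {a : Fin N → ℤ} {L : MvPolynomial (Fin 3) K} (hL : homog L 1)
    {d : ℤ} {v : Fin N → MvPolynomial (Fin 3) K} (hv : v ∈ degPiece (K := K) N a (d - 1)) :
    mulL N L v ∈ degPiece (K := K) N a d := by
  rw [mem_degPiece] at hv ⊢
  intro i
  have h := hL.mul (hv i)
  have e : (1 : ℤ) + (d - 1 - a i) = d - a i := by ring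
  rw [e] at h
  simpa [mulL_apply, smul_eq_mul, homog] using h

/-- Multiplication by `L` from the degree-`d-1` piece of `G` to the degree-`d` piece. -/
def mulLres (n : ℕ) (b : Fin n → ℤ) (L : MvPolynomial (Fin 3) K) (hL : homog L 1) (d : ℤ) :
    ↥(degPiece (K := K) n b (d - 1)) →ₗ[K] ↥(degPiece (K := K) n b d) :=
  (mulL n L).restrict fun _ hv => mulL_mem hL hv

lemma mulLres_comap (n : ℕ) (a : Fin (n + 2) → ℤ) (b : Fin n → ℤ)
    (Φ : Matrix (Fin n) (Fin (n + 2)) (MvPolynomial (Fin 3) K))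
    (L : MvPolynomial (Fin 3) K) (hL : homog L 1) (d : ℤ) :
    MdSub n a b Φ (d - 1) ≤ Submodule.comap (mulLres n b L hL d) (MdSub n a b Φ d) := by
  rintro ⟨w, hw⟩ hmem
  obtain ⟨v, hv, hφv⟩ := hmem
  refine ⟨mulL (n + 2) L v, mulL_mem hL hv, ?_⟩
  show phiK n Φ (mulL (n + 2) L v) = ((mulLres n b L hL d) ⟨w, hw⟩ : Fin n → MvPolynomial (Fin 3) K)
  have : phiK n Φ (mulL (n + 2) L v) = L • phiK n Φ v := by
    simp [phiK, mulL_apply]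
  rw [this, hφv]
  rfl

/-- The map induced by multiplication by `L` from `M_{d-1}` to `M_d`,
where `M = coker φ`. -/
def mulLmap (n : ℕ) (a : Fin (n + 2) → ℤ) (b : Fin n → ℤ)
    (Φ : Matrix (Fin n) (Fin (n + 2)) (MvPolynomial (Fin 3) K))
    (L : MvPolynomial (Fin 3) K) (hL : homog L 1) (d : ℤ) :
    Md n a b Φ (d - 1) →ₗ[K] Md n a b Φ d :=
  Submodule.mapQ (MdSub n a b Φ (d - 1)) (MdSub n a b Φ d) (mulLres n b L hL d)
    (mulLres_comap n a b Φ L hL d)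

/-- The linear form with coefficient vector `c`. -/
def linform (c : Fin 3 → K) : MvPolynomial (Fin 3) K := ∑ i, C (c i) * X i

lemma homog_linform (c : Fin 3 → K) : homog (linform c) 1 := by
  rw [homog, ← mem_weightedHomogeneousSubmodule]
  refine sum_mem fun i _ => ?_
  rw [mem_weightedHomogeneousSubmodule]
  simpa using (isWeightedHomogeneous_C (fun _ : Fin 3 => (1 : ℤ)) (c i)).mul
    (isWeightedHomogeneous_X K (fun _ : Fin 3 => (1 : ℤ)) i)

/-- Finite length of `coker φ`: all sufficiently high graded pieces vanish. -/
def FiniteColength (n : ℕ) (a : Fin (n + 2) → ℤ) (b : Fin n → ℤ)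
    (Φ : Matrix (Fin n) (Fin (n + 2)) (MvPolynomial (Fin 3) K)) : Prop :=
  ∃ D : ℤ, ∀ d : ℤ, D ≤ d →
    degPiece (K := K) n b d ≤ Submodule.map (phiK n Φ) (degPiece (n + 2) a d)

end


namespace WLP

section Hom
variable {K : Type*} [Field K] {σ τ : Type*}

/-- homogeneity with integer degrees, any variable set -/
abbrev WH (p : MvPolynomial σ K) (d : ℤ) : Prop :=
  IsWeightedHomogeneous (fun _ : σ => (1 : ℤ)) p d

lemma weight_eq [Fintype σ] (m : σ →₀ ℕ) :
    Finsupp.weight (fun _ : σ => (1 : ℤ)) m = ∑ i, (m i : ℤ) := by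
  rw [Finsupp.weight_apply, Finsupp.sum_fintype]
  · simp
  · simp

lemma WH.zero (d : ℤ) : WH (0 : MvPolynomial σ K) d := isWeightedHomogeneous_zero _ _ _

lemma WH.Cmul {p : MvPolynomial σ K} {d : ℤ} (h : WH p d) (r : K) : WH (C r * p) d :=
  IsWeightedHomogeneous.C_mul h r

lemma WH.cast {p : MvPolynomial σ K} {d e : ℤ} (h : WH p d) (hde : d = e) : WH p e := hde ▸ h

lemma WH_X (i : σ) : WH (X i : MvPolynomial σ K) 1 := isWeightedHomogeneous_X _ _ _

lemma WH_Xpow (i : σ) (k : ℕ) : WH (X i ^ k : MvPolynomial σ K) k :=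
  WH.cast ((WH_X i).pow k) (by simp)

lemma WH.nonneg [Fintype σ] {p : MvPolynomial σ K} {d : ℤ} (h : WH p d) (hp : p ≠ 0) : 0 ≤ d := by
  obtain ⟨m, hm⟩ := MvPolynomial.ne_zero_iff.mp hp
  have := h hm
  rw [weight_eq] at this
  rw [← this]
  exact Finset.sum_nonneg fun i _ => by positivity

lemma WH.aeval [Fintype σ] {p : MvPolynomial σ K} {d : ℤ} (h : WH p d)
    {g : σ → MvPolynomial τ K} (hg : ∀ i, WH (g i) 1) : WH (MvPolynomial.aeval g p) d := by
  rw [MvPolynomial.aeval_def, MvPolynomial.eval₂_eq']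
  refine IsWeightedHomogeneous.sum _ _ _ fun m hm => ?_
  have hm' := h (MvPolynomial.mem_support_iff.mp hm)
  rw [weight_eq] at hm'
  have := IsWeightedHomogeneous.prod Finset.univ (fun i => g i ^ m i) (fun i => (m i : ℤ))
    (w := fun _ : τ => (1 : ℤ)) (fun i _ => by simpa using (hg i).pow (m i))
  rw [hm'] at this
  exact WH.Cmul this _

lemma WH.aeval_smul [Fintype σ] {p : MvPolynomial σ K} {d : ℤ} (h : WH p d)
    {A : Type*} [CommRing A] [Algebra K A] (P : σ → K) (t : A) :
    MvPolynomial.aeval (fun i => P i • t) p = MvPolynomial.eval P p • t ^ d.toNat := by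
  rw [MvPolynomial.aeval_def, MvPolynomial.eval₂_eq', MvPolynomial.eval_eq', Finset.sum_smul]
  refine Finset.sum_congr rfl fun m hm => ?_
  have hm' := h (MvPolynomial.mem_support_iff.mp hm)
  rw [weight_eq] at hm'
  have hd : d.toNat = ∑ i, m i := by
    rw [← hm']; exact_mod_cast Int.toNat_natCast _
  simp only [smul_pow, Finset.prod_smul, hd]
  rw [Finset.prod_pow_eq_pow_sum, ← Algebra.smul_def, smul_smul]

attribute [local instance] MvPolynomial.weightedGradedAlgebra

lemma comp_mul {h : MvPolynomial σ K} {e : ℤ} (hh : WH h e) (q : MvPolynomial σ K) (D : ℤ) :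
    weightedHomogeneousComponent (fun _ : σ => (1 : ℤ)) (e + D) (h * q)
      = h * weightedHomogeneousComponent (fun _ : σ => (1 : ℤ)) D q := by
  have := DirectSum.coe_decompose_mul_add_of_left_mem
    (weightedHomogeneousSubmodule K (fun _ : σ => (1 : ℤ))) (i := e) (j := D) (a := h) (b := q)
    ((mem_weightedHomogeneousSubmodule _ _ _ _).2 hh)
  rw [← weightedDecomposition.decompose'_apply, ← weightedDecomposition.decompose'_apply]
  exact this

lemma WH.of_mul {h q : MvPolynomial σ K} {e D : ℤ} (hh : WH h e) (h0 : h ≠ 0)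
    (hq : WH (h * q) D) : WH q (D - e) := by
  have h1 := comp_mul hh q (D - e)
  rw [add_sub_cancel, weightedHomogeneousComponent_eq_self hq] at h1
  have := mul_left_cancel₀ h0 h1
  rw [this]
  exact weightedHomogeneousComponent_isWeightedHomogeneous _ _

lemma fd_WH [Finite σ] (d : ℤ) :
    FiniteDimensional K (weightedHomogeneousSubmodule K (fun _ : σ => (1 : ℤ)) d) := by
  classical
  have := Fintype.ofFinite σ
  have hle : weightedHomogeneousSubmodule K (fun _ : σ => (1 : ℤ)) d ≤
      weightedHomogeneousSubmodule K (fun _ : σ => (1 : ℕ)) d.toNat := by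
    intro p hp m hm
    have := hp hm
    rw [weight_eq] at this
    rw [Finsupp.weight_apply, Finsupp.sum_fintype _ _ (by simp), ← this]
    simp only [smul_eq_mul, mul_one]
    exact_mod_cast (Int.toNat_natCast _).symm
  have : FiniteDimensional K (weightedHomogeneousSubmodule K (fun _ : σ => (1 : ℕ)) d.toNat) :=
    Module.Finite.iff_fg.mpr (weightedHomogeneousSubmodule_fg _ _ (by simp) _)
  exact Submodule.finiteDimensional_of_le hle

end Hom
end WLP


namespace WLP

section Two
variable {K : Type*} [Field K]

/-- linear form on the line vanishing at `P` -/
noncomputable def ell (P : Fin 2 → K) : MvPolynomial (Fin 2) K := C (P 1) * X 0 - C (P 0) * X 1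

lemma WH_ell (P : Fin 2 → K) : WH (ell P) 1 :=
  ((WH_X 0).Cmul _).sub ((WH_X 1).Cmul _)

lemma ell_ne {P : Fin 2 → K} (hP : P ≠ 0) : ell P ≠ 0 := by
  intro h
  apply hP
  have h0 := congrArg (eval ![(1:K), 0]) h
  have h1 := congrArg (eval ![(0:K), 1]) h
  simp [ell] at h0 h1
  funext i
  fin_cases i <;> simp [h0, h1]

lemma ell_dvd {p : MvPolynomial (Fin 2) K} {d : ℤ} (hp : WH p d) {P : Fin 2 → K} (hP : P ≠ 0)
    (h : eval P p = 0) : ∃ q, WH q (d - 1) ∧ p = ell P * q := by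
  have key : ∃ t : (MvPolynomial (Fin 2) K ⧸ Ideal.span {ell P}),
      ∀ i, Ideal.Quotient.mkₐ K (Ideal.span {ell P}) (X i) = P i • t := by
    have h0 : Ideal.Quotient.mkₐ K (Ideal.span {ell P}) (ell P) = 0 := by
      simp only [Ideal.Quotient.mkₐ_eq_mk]
      exact Ideal.Quotient.eq_zero_iff_mem.mpr (Ideal.mem_span_singleton_self _)
    have h1 : P 1 • Ideal.Quotient.mkₐ K (Ideal.span {ell P}) (X 0) =
        P 0 • Ideal.Quotient.mkₐ K (Ideal.span {ell P}) (X 1) := by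
      have he : ell P = P 1 • X 0 - P 0 • X 1 := by rw [ell, smul_eq_C_mul, smul_eq_C_mul]
      rw [← sub_eq_zero, ← map_smul, ← map_smul, ← map_sub, ← he]
      exact h0
    by_cases hP0 : P 0 = 0
    · have hP1 : P 1 ≠ 0 := fun h => hP (by funext i; fin_cases i <;> simp [hP0, h])
      refine ⟨(P 1)⁻¹ • Ideal.Quotient.mkₐ K (Ideal.span {ell P}) (X 1), fun i => ?_⟩
      fin_cases i
      · show Ideal.Quotient.mkₐ K (Ideal.span {ell P}) (X 0) = P 0 • _
        rw [smul_comm, ← h1, smul_smul, inv_mul_cancel₀ hP1, one_smul]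
      · show Ideal.Quotient.mkₐ K (Ideal.span {ell P}) (X 1) = P 1 • _
        rw [smul_smul, mul_inv_cancel₀ hP1, one_smul]
    · refine ⟨(P 0)⁻¹ • Ideal.Quotient.mkₐ K (Ideal.span {ell P}) (X 0), fun i => ?_⟩
      fin_cases i
      · show Ideal.Quotient.mkₐ K (Ideal.span {ell P}) (X 0) = P 0 • _
        rw [smul_smul, mul_inv_cancel₀ hP0, one_smul]
      · show Ideal.Quotient.mkₐ K (Ideal.span {ell P}) (X 1) = P 1 • _
        rw [smul_comm, h1, smul_smul, inv_mul_cancel₀ hP0, one_smul]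
  obtain ⟨t, ht⟩ := key
  have h2 : Ideal.Quotient.mkₐ K (Ideal.span {ell P}) p = 0 := by
    have : Ideal.Quotient.mkₐ K (Ideal.span {ell P}) p
        = aeval (fun i => Ideal.Quotient.mkₐ K (Ideal.span {ell P}) (X i)) p := by
      rw [← comp_aeval_apply, aeval_X_left_apply]
    rw [this, show (fun i => Ideal.Quotient.mkₐ K (Ideal.span {ell P}) (X i)) = fun i => P i • t
      from funext ht, hp.aeval_smul, h, zero_smul]
  rw [Ideal.Quotient.mkₐ_eq_mk, Ideal.Quotient.eq_zero_iff_mem, Ideal.mem_span_singleton] at h2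
  obtain ⟨q, hq⟩ := h2
  exact ⟨q, (WH_ell P).of_mul (ell_ne hP) (hq ▸ hp), hq⟩

variable {n N : ℕ}

/-- graded kernel -/
def Ker (A : Matrix (Fin n) (Fin N) (MvPolynomial (Fin 2) K)) (a : Fin N → ℤ) (D : ℤ)
    (f : Fin N → MvPolynomial (Fin 2) K) : Prop :=
  (∀ i, WH (f i) (D - a i)) ∧ A.mulVec f = 0

/-- surjectivity in degree `D` -/
def Sur (A : Matrix (Fin n) (Fin N) (MvPolynomial (Fin 2) K)) (a : Fin N → ℤ) (b : Fin n → ℤ)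
    (D : ℤ) : Prop :=
  ∀ g : Fin n → MvPolynomial (Fin 2) K, (∀ j, WH (g j) (D - b j)) →
    ∃ u : Fin N → MvPolynomial (Fin 2) K, (∀ i, WH (u i) (D - a i)) ∧ A.mulVec u = g

variable {A : Matrix (Fin n) (Fin N) (MvPolynomial (Fin 2) K)} {a : Fin N → ℤ} {b : Fin n → ℤ}

lemma Ker.smul {D e : ℤ} {f : Fin N → MvPolynomial (Fin 2) K} (hf : Ker A a D f)
    {h : MvPolynomial (Fin 2) K} (hh : WH h e) : Ker A a (e + D) (h • f) := by
  refine ⟨fun i => WH.cast (hh.mul (hf.1 i)) (by ring), ?_⟩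
  rw [Matrix.mulVec_smul, hf.2, smul_zero]

lemma Ker.sub {D : ℤ} {f g : Fin N → MvPolynomial (Fin 2) K} (hf : Ker A a D f)
    (hg : Ker A a D g) : Ker A a D (f - g) :=
  ⟨fun i => (hf.1 i).sub (hg.1 i), by rw [Matrix.mulVec_sub, hf.2, hg.2, sub_zero]⟩

lemma Ker.cast {D E : ℤ} {f : Fin N → MvPolynomial (Fin 2) K} (hf : Ker A a D f) (h : D = E) :
    Ker A a E f := h ▸ hf

/-- divide a kernel element vanishing at `P` -/
lemma Ker.div {D : ℤ} {f : Fin N → MvPolynomial (Fin 2) K} (hf : Ker A a D f)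
    {P : Fin 2 → K} (hP : P ≠ 0) (h0 : ∀ i, eval P (f i) = 0) :
    ∃ g, Ker A a (D - 1) g ∧ f = ell P • g := by
  choose g hg1 hg2 using fun i => ell_dvd (hf.1 i) hP (h0 i)
  have hfg : f = ell P • g := funext hg2
  refine ⟨g, ⟨fun i => WH.cast (hg1 i) (by ring), ?_⟩, hfg⟩
  have := hf.2
  rw [hfg, Matrix.mulVec_smul] at this
  exact (smul_eq_zero.mp this).resolve_left (ell_ne hP)

lemma min_eval_ne {p : ℤ} {f : Fin N → MvPolynomial (Fin 2) K} (hf : Ker A a p f) (hf0 : f ≠ 0)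
    (hmin : ∀ D < p, ∀ f', Ker A a D f' → f' = 0) {P : Fin 2 → K} (hP : P ≠ 0) :
    ∃ i, eval P (f i) ≠ 0 := by
  by_contra hcon
  push Not at hcon
  obtain ⟨g, hg, hfg⟩ := hf.div hP hcon
  rw [hmin _ (by lia) g hg, smul_zero] at hfg
  exact hf0 hfg

/-- socle element gives a minimal generator of the kernel -/
lemma exists_gen (hfin : ∃ D0 : ℤ, ∀ D ≥ D0, Sur A a b D) {d : ℤ} (hd : ¬ Sur A a b d) :
    ∃ d1 ≥ d, ∃ w, Ker A a (d1 + 2) w ∧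
      ¬ ∃ w1 w2, Ker A a (d1 + 1) w1 ∧ Ker A a (d1 + 1) w2 ∧
        w = (X 0 : MvPolynomial (Fin 2) K) • w1 + (X 1 : MvPolynomial (Fin 2) K) • w2 := by
  obtain ⟨D0, hD0⟩ := hfin
  obtain ⟨d1, ⟨hd1, hn⟩, hmax⟩ := Int.exists_greatest_of_bdd (P := fun D => d ≤ D ∧ ¬ Sur A a b D)
    ⟨D0, fun z hz => by
      by_contra hc
      exact hz.2 (hD0 z (by lia))⟩ ⟨d, le_rfl, hd⟩
  have hs : Sur A a b (d1 + 1) := by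
    by_contra hc
    have := hmax (d1 + 1) ⟨by lia, hc⟩
    lia
  unfold Sur at hn
  push Not at hn
  obtain ⟨g, hg, hng⟩ := hn
  obtain ⟨u, hu, hu'⟩ := hs ((X 0 : MvPolynomial (Fin 2) K) • g) fun j =>
    WH.cast ((WH_X 0).mul (hg j)) (by ring)
  obtain ⟨v, hv, hv'⟩ := hs ((X 1 : MvPolynomial (Fin 2) K) • g) fun j =>
    WH.cast ((WH_X 1).mul (hg j)) (by ring)
  refine ⟨d1, hd1, (X 1 : MvPolynomial (Fin 2) K) • u - (X 0 : MvPolynomial (Fin 2) K) • v,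
    ⟨fun i => IsWeightedHomogeneous.sub (WH.cast ((WH_X 1).mul (hu i)) (by ring))
      (WH.cast ((WH_X 0).mul (hv i)) (by ring)), ?_⟩, ?_⟩
  · rw [Matrix.mulVec_sub, Matrix.mulVec_smul, Matrix.mulVec_smul, hu', hv', smul_comm, sub_self]
  · rintro ⟨w1, w2, hw1, hw2, hw⟩
    have h1 : ∀ i, ∃ y, WH y (d1 - a i) ∧ u i - w2 i = X 0 * y := by
      intro i
      have e1 : (X 1 : MvPolynomial (Fin 2) K) * (u i - w2 i) = X 0 * (v i + w1 i) := by
        have := congrFun hw i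
        simp only [Pi.sub_apply, Pi.smul_apply, Pi.add_apply, smul_eq_mul] at this
        linear_combination this
      have e2 : eval ![(0:K), 1] (u i - w2 i) = 0 := by
        have := congrArg (eval ![(0:K), 1]) e1
        simpa using this
      obtain ⟨q, hq, hq'⟩ := ell_dvd ((hu i).sub (hw2.1 i)) (P := ![(0:K), 1])
        (fun h => by simpa using congrFun h 1) e2
      exact ⟨q, WH.cast hq (by ring), by rw [hq']; simp [ell]⟩
    choose y hy hy' using h1
    refine hng y hy ?_
    have e3 : u - w2 = (X 0 : MvPolynomial (Fin 2) K) • y := funext hy'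
    have e4 := congrArg A.mulVec e3
    rw [Matrix.mulVec_sub, hu', hw2.2, sub_zero, Matrix.mulVec_smul] at e4
    exact (smul_right_injective _ (X_ne_zero (R := K) (0 : Fin 2)) e4).symm

lemma surj_eval (hfin : ∃ D0 : ℤ, ∀ D ≥ D0, Sur A a b D) :
    Function.Surjective (A.map (eval ![(1:K), 0])).mulVec := by
  obtain ⟨D0, hD0⟩ := hfin
  intro y
  obtain ⟨E, hE⟩ : ∃ E : ℤ, ∀ j, b j ≤ E := by
    obtain ⟨E, hE⟩ := (Set.finite_range b).bddAbove
    exact ⟨E, fun j => hE ⟨j, rfl⟩⟩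
  obtain ⟨u, hu, hu'⟩ := hD0 (max D0 E) (le_max_left _ _)
    (fun j => C (y j) * X 0 ^ (max D0 E - b j).toNat) fun j =>
      (WH.cast (WH_Xpow 0 _) (Int.toNat_of_nonneg (by
        have := hE j; have := le_max_right D0 E; lia))).Cmul _
  refine ⟨fun i => eval ![(1:K), 0] (u i), ?_⟩
  funext j
  have := congrArg (eval ![(1:K), 0]) (congrFun hu' j)
  simp [Matrix.mulVec, dotProduct] at this ⊢
  exact this

lemma span_two {B : Matrix (Fin n) (Fin (n + 2)) K} (hB : Function.Surjective B.mulVec)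
    {v1 v2 w : Fin (n + 2) → K} (h1 : B.mulVec v1 = 0) (h2 : B.mulVec v2 = 0) (hw : B.mulVec w = 0)
    (hli : LinearIndependent K ![v1, v2]) : ∃ s t : K, w = s • v1 + t • v2 := by
  have hr := LinearMap.finrank_range_add_finrank_ker B.mulVecLin
  rw [LinearMap.range_eq_top.mpr hB] at hr
  simp at hr
  have hle : Submodule.span K (Set.range ![v1, v2]) ≤ LinearMap.ker B.mulVecLin := by
    rw [Submodule.span_le]
    rintro _ ⟨i, rfl⟩
    fin_cases i <;> simpa
  have hfr := finrank_span_eq_card hli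
  have heq := Submodule.eq_of_le_of_finrank_eq hle (by rw [hfr, Fintype.card_fin]; lia)
  have hmem : w ∈ Submodule.span K (Set.range ![v1, v2]) := by
    rw [heq]; simpa using hw
  rw [show Set.range ![v1, v2] = {v1, v2} by simp [Set.pair_comm], Submodule.mem_span_pair] at hmem
  obtain ⟨s, t, h⟩ := hmem
  exact ⟨s, t, h.symm⟩

end Two

section Struct
variable {K : Type*} [Field K] {n : ℕ}
variable {A : Matrix (Fin n) (Fin (n + 2)) (MvPolynomial (Fin 2) K)} {a : Fin (n + 2) → ℤ}
  {b : Fin n → ℤ}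

/-- `c x^k` -/
noncomputable def xm (c : K) (k : ℤ) : MvPolynomial (Fin 2) K := C c * X 0 ^ k.toNat

lemma WH_xm (c : K) {k : ℤ} (hk : 0 ≤ k) : WH (xm c k) k :=
  WH.Cmul (WH.cast (WH_Xpow 0 _) (Int.toNat_of_nonneg hk)) c

lemma eval_xm (c : K) (k : ℤ) : eval ![(1:K), 0] (xm c k) = c := by simp [xm]

lemma xm_succ (c : K) {k : ℤ} (hk : 0 ≤ k) : xm c (k + 1) = X 0 * xm c k := by
  rw [xm, xm, show (k + 1).toNat = k.toNat + 1 by lia]; ring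

lemma ker_eval {D : ℤ} {f : Fin (n + 2) → MvPolynomial (Fin 2) K} (hf : Ker A a D f)
    (P : Fin 2 → K) : (A.map (eval P)).mulVec (fun i => eval P (f i)) = 0 := by
  funext j
  have := congrArg (eval P) (congrFun hf.2 j)
  simp [Matrix.mulVec, dotProduct] at this ⊢
  exact this

/-- structure of the kernel on a line in low degrees -/
lemma struct (hfin : ∃ D0 : ℤ, ∀ D ≥ D0, Sur A a b D) {d : ℤ} (hd : ¬ Sur A a b d)
    {p : ℤ} {f : Fin (n + 2) → MvPolynomial (Fin 2) K} (hf : Ker A a p f) (hf0 : f ≠ 0)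
    (hmin : ∀ D < p, ∀ f', Ker A a D f' → f' = 0) :
    ∀ D ≤ d + 1, ∀ f', Ker A a D f' → ∃ h : MvPolynomial (Fin 2) K, WH h (D - p) ∧ f' = h • f := by
  by_contra hcon
  push Not at hcon
  obtain ⟨q, ⟨hqd, f2, hf2, hf2n⟩, hqmin⟩ := Int.exists_least_of_bdd
    (P := fun D => D ≤ d + 1 ∧ ∃ f', Ker A a D f' ∧ ∀ h : MvPolynomial (Fin 2) K, WH h (D - p) → f' ≠ h • f)
    ⟨p, fun z hz => by
      by_contra hc
      obtain ⟨_, f', hf', hn⟩ := hz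
      exact hn 0 (WH.zero _) (by rw [hmin z (by lia) f' hf', zero_smul])⟩ hcon
  have hpq : p ≤ q := by
    by_contra hc
    exact hf2n 0 (WH.zero _) (by rw [hmin q (by lia) f2 hf2, zero_smul])
  obtain ⟨d1, hd1, w, hw, hwn⟩ := exists_gen hfin hd
  set P : Fin 2 → K := ![(1:K), 0] with hPdef
  have hP : P ≠ 0 := fun h => by simpa [hPdef] using congrFun h 0
  have hli : LinearIndependent K ![fun i => eval P (f i), fun i => eval P (f2 i)] := by
    rw [LinearIndependent.pair_iff' ?_]
    · intro c hc
      have hker : Ker A a q (f2 - (xm c (q - p)) • f) :=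
        hf2.sub (Ker.cast (hf.smul (WH_xm c (k := q - p) (by lia))) (by ring))
      obtain ⟨f3, hf3, he⟩ := hker.div hP fun i => by
        have := congrFun hc i
        simp [hPdef, eval_xm] at this ⊢
        rw [this, sub_self]
      have hex : ∃ h : MvPolynomial (Fin 2) K, WH h (q - 1 - p) ∧ f3 = h • f := by
        by_contra hn
        push Not at hn
        have := hqmin (q - 1) ⟨by lia, f3, hf3, hn⟩
        lia
      obtain ⟨h, hh, hf3e⟩ := hex
      refine hf2n (ell P * h + xm c (q - p)) ?_ ?_
      · exact IsWeightedHomogeneous.add (WH.cast ((WH_ell P).mul hh) (by ring))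
          (WH_xm c (k := q - p) (by lia))
      · rw [add_smul, mul_smul, ← hf3e, ← he, sub_add_cancel]
    · obtain ⟨i, hi⟩ := min_eval_ne hf hf0 hmin hP
      exact fun h => hi (congrFun h i)
  obtain ⟨s, t, hst⟩ := span_two (surj_eval hfin) (ker_eval hf P) (ker_eval hf2 P)
    (ker_eval hw P) hli
  have hker : Ker A a (d1 + 2) (w - (xm s (d1 + 2 - p)) • f
      - (xm t (d1 + 2 - q)) • f2) :=
    (hw.sub (Ker.cast (hf.smul (WH_xm s (k := d1 + 2 - p) (by lia))) (by ring))).sub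
      (Ker.cast (hf2.smul (WH_xm t (k := d1 + 2 - q) (by lia))) (by ring))
  obtain ⟨w', hw', he⟩ := hker.div hP fun i => by
    have := congrFun hst i
    simp [hPdef, eval_xm] at this ⊢
    rw [this]; ring
  refine hwn ⟨(xm s (d1 + 1 - p)) • f + (xm t (d1 + 1 - q)) • f2,
    -w', ?_, ?_, ?_⟩
  · have h1 := Ker.cast (hf.smul (WH_xm s (k := d1 + 1 - p) (by lia))) (E := d1 + 1) (by ring)
    have h2 := Ker.cast (hf2.smul (WH_xm t (k := d1 + 1 - q) (by lia))) (E := d1 + 1) (by ring)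
    exact ⟨fun i => (h1.1 i).add (h2.1 i), by rw [Matrix.mulVec_add, h1.2, h2.2, add_zero]⟩
  · exact ⟨fun i => WH.cast (hw'.1 i).neg (by ring), by rw [Matrix.mulVec_neg, hw'.2, neg_zero]⟩
  · rw [show d1 + 2 - p = (d1 + 1 - p) + 1 by ring, show d1 + 2 - q = (d1 + 1 - q) + 1 by ring,
      xm_succ _ (by lia), xm_succ _ (by lia)] at he
    funext i
    have := congrFun he i
    simp [ell, hPdef] at this ⊢
    linear_combination this

end Struct
end WLP


namespace WLP

section Alg

lemma ufd_prim {R : Type*} [CommRing R] [IsDomain R] [UniqueFactorizationMonoid R] {N : ℕ}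
    {τ : Fin N → R} (hτ : τ ≠ 0) :
    ∃ (g : R) (s : Fin N → R), τ = g • s ∧ ∀ w : Fin N → R,
      (∀ i j, w i * τ j = w j * τ i) → ∃ r : R, w = r • s := by
  classical
  obtain ⟨i0, hi0⟩ := Function.ne_iff.mp hτ
  simp only [Pi.zero_apply] at hi0
  let _ : StrongNormalizationMonoid R := UniqueFactorizationMonoid.strongNormalizationMonoid
  let _ : NormalizedGCDMonoid R := UniqueFactorizationMonoid.toNormalizedGCDMonoid R
  obtain ⟨s, hs, hs1⟩ := Finset.extract_gcd (s := Finset.univ) τ ⟨i0, Finset.mem_univ _⟩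
  have hτs : τ = (Finset.univ.gcd τ) • s := funext fun i => hs i (Finset.mem_univ _)
  have hg : Finset.univ.gcd τ ≠ 0 := fun h => hi0 (by rw [hs i0 (Finset.mem_univ _), h, zero_mul])
  refine ⟨Finset.univ.gcd τ, s, hτs, fun w hw => ?_⟩
  have hw' : ∀ i j, w i * s j = w j * s i := fun i j => by
    have := hw i j
    rw [hs i (Finset.mem_univ _), hs j (Finset.mem_univ _)] at this
    exact mul_left_cancel₀ hg (by linear_combination this)
  have hsi0 : s i0 ≠ 0 := fun h => hi0 (by rw [hs i0 (Finset.mem_univ _), h, mul_zero])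
  have hd : s i0 ∣ w i0 := by
    have h1 : s i0 ∣ Finset.univ.gcd fun i => w i0 * s i :=
      Finset.dvd_gcd fun i _ => ⟨w i, by rw [← hw' i i0]; ring⟩
    have h2 := (Finset.gcd_mul_left' Finset.univ s (w i0)).dvd
    rw [hs1, mul_one] at h2
    exact h1.trans h2
  obtain ⟨r, hr⟩ := hd
  refine ⟨r, funext fun i => mul_right_cancel₀ hsi0 ?_⟩
  rw [hw' i i0, hr]
  simp only [Pi.smul_apply, smul_eq_mul]
  ring

lemma wronsk {K : Type*} [Field K] [CharZero K] {A B : Polynomial K}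
    (h : A * Polynomial.derivative B = Polynomial.derivative A * B) (s t : K) :
    A.eval s * B.eval t = A.eval t * B.eval s := by
  classical
  by_cases h0 : A = 0 ∧ B = 0
  · rw [h0.1, h0.2]; simp
  have hg : EuclideanDomain.gcd A B ≠ 0 := fun h => h0 (EuclideanDomain.gcd_eq_zero_iff.mp h)
  obtain ⟨a, ha⟩ := EuclideanDomain.gcd_dvd_left A B
  obtain ⟨b, hb⟩ := EuclideanDomain.gcd_dvd_right A B
  have hco : IsCoprime a b := by
    refine ⟨EuclideanDomain.gcdA A B, EuclideanDomain.gcdB A B, mul_left_cancel₀ hg ?_⟩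
    have := EuclideanDomain.gcd_eq_gcd_ab A B
    linear_combination -this - EuclideanDomain.gcdA A B * ha - EuclideanDomain.gcdB A B * hb
  set g := EuclideanDomain.gcd A B
  have hw : Polynomial.wronskian a b = 0 := by
    have h1 : g ^ 2 * Polynomial.wronskian a b = 0 := by
      rw [Polynomial.wronskian]
      rw [ha, hb, Polynomial.derivative_mul, Polynomial.derivative_mul] at h
      linear_combination h
    exact (mul_eq_zero.mp h1).resolve_left (pow_ne_zero _ hg)
  obtain ⟨h1, h2⟩ := hco.wronskian_eq_zero_iff.mp hw
  have ha' := Polynomial.eq_C_of_derivative_eq_zero h1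
  have hb' := Polynomial.eq_C_of_derivative_eq_zero h2
  rw [ha, hb, ha', hb']
  simp only [Polynomial.eval_mul, Polynomial.eval_C]
  ring

lemma const_of_no_zero {K : Type*} [Field K] [IsAlgClosed K] {h : MvPolynomial (Fin 2) K}
    (hz : ∀ P : Fin 2 → K, P ≠ 0 → eval P h ≠ 0) : ∃ k : K, k ≠ 0 ∧ h = C k := by
  have key : ∀ i : Fin 2, ∃ m : ℕ, h ∣ X i ^ m := by
    intro i
    have : (X i : MvPolynomial (Fin 2) K) ∈ (Ideal.span {h}).radical := by
      rw [← vanishingIdeal_zeroLocus_eq_radical (K := K), mem_vanishingIdeal_iff]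
      intro x hx
      rw [mem_zeroLocus_iff] at hx
      have h1 := hx h (Ideal.mem_span_singleton_self _)
      have h2 : x = 0 := by
        by_contra hne
        exact hz x hne (by simpa [aeval_eq_eval] using h1)
      simp [h2]
    obtain ⟨m, hm⟩ := this
    exact ⟨m, Ideal.mem_span_singleton.mp hm⟩
  obtain ⟨m, hm⟩ := key 0
  obtain ⟨m', hm'⟩ := key 1
  obtain ⟨i, hi, has⟩ := (dvd_prime_pow (X_prime (R := K) (i := (0 : Fin 2))) m).mp hm
  have hi0 : i = 0 := by
    by_contra hne
    have h1 : (X 0 : MvPolynomial (Fin 2) K) ∣ X 1 ^ m' :=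
      (dvd_pow_self _ hne).trans (has.symm.dvd.trans hm')
    obtain ⟨q, hq⟩ := h1
    have := congrArg (eval ![(0 : K), 1]) hq
    simp at this
  rw [hi0, pow_zero, associated_one_iff_isUnit] at has
  obtain ⟨k, hk, hk'⟩ := isUnit_iff_eq_C_of_isReduced.mp has
  exact ⟨k, hk.ne_zero, hk'⟩

/-- chain rule along a line -/
lemma chain {K : Type*} [Field K] (α β : Fin 3 → K) (q : MvPolynomial (Fin 3) K) :
    Polynomial.derivative (aeval (fun k => Polynomial.C (α k) + Polynomial.X * Polynomial.C (β k)) q)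
      = ∑ k, Polynomial.C (β k) *
        aeval (fun k => Polynomial.C (α k) + Polynomial.X * Polynomial.C (β k)) (pderiv k q) := by
  induction q using MvPolynomial.induction_on with
  | C r => simp [Polynomial.algebraMap_eq]
  | add p q hp hq => simp only [map_add, hp, hq, mul_add, Finset.sum_add_distrib]
  | mul_X p i hp =>
    simp only [map_mul, aeval_X, Polynomial.derivative_mul, hp, Derivation.leibniz, pderiv_X,
      smul_eq_mul, map_add, Fin.sum_univ_three]
    fin_cases i <;> simp [Pi.single_apply] <;> ring

lemma eval_line {K : Type*} [Field K] (α β : Fin 3 → K) (q : MvPolynomial (Fin 3) K) (t : K) :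
    Polynomial.eval t (aeval (fun k => Polynomial.C (α k) + Polynomial.X * Polynomial.C (β k)) q)
      = eval (fun k => α k + t * β k) q := by
  rw [← Polynomial.coe_aeval_eq_eval, ← AlgHom.coe_toRingHom]
  have := comp_aeval_apply (φ := Polynomial.aeval (R := K) t)
    (f := fun k => Polynomial.C (α k) + Polynomial.X * Polynomial.C (β k)) q
  simp only [AlgHom.coe_toRingHom, RingHom.coe_coe, this]
  simp [aeval_eq_eval]
  congr 2
  funext k
  ring

end Alg

section Cross

/-- cross product -/
def cr {A : Type*} [CommRing A] (P v : Fin 3 → A) : Fin 3 → A :=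
  ![P 1 * v 2 - P 2 * v 1, P 2 * v 0 - P 0 * v 2, P 0 * v 1 - P 1 * v 0]

lemma cr_dot {A : Type*} [CommRing A] (P v : Fin 3 → A) : ∑ k, cr P v k * P k = 0 := by
  simp [cr, Fin.sum_univ_three]; ring

lemma exists_cr {K : Type*} [Field K] {P c : Fin 3 → K} (hP : P ≠ 0) (h : ∑ k, c k * P k = 0) :
    ∃ v, cr P v = c := by
  rw [Fin.sum_univ_three] at h
  by_cases h0 : P 0 = 0
  · by_cases h1 : P 1 = 0
    · have h2 : P 2 ≠ 0 := fun h2 => hP (by funext i; fin_cases i <;> simp [h0, h1, h2])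
      refine ⟨![c 1 / P 2, - c 0 / P 2, 0], ?_⟩
      have hc : c 2 = 0 := by simpa [h0, h1, h2] using h
      funext i; fin_cases i <;> simp [cr, h0, h1, hc] <;> field_simp
    · refine ⟨![- c 2 / P 1, 0, c 0 / P 1], ?_⟩
      have hc : c 1 = - (c 2 * P 2) / P 1 := by
        rw [eq_div_iff h1]; rw [h0] at h; linear_combination h
      funext i; fin_cases i <;> simp [cr, h0, hc] <;> field_simp
  · refine ⟨![0, c 2 / P 0, - c 1 / P 0], ?_⟩
    have hc : c 0 = - (c 1 * P 1 + c 2 * P 2) / P 0 := by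
      rw [eq_div_iff h0]; linear_combination h
    funext i; fin_cases i <;> simp [cr, hc] <;> field_simp <;> ring

lemma exists_perp {K : Type*} [Field K] (c : Fin 3 → K) :
    ∃ P : Fin 3 → K, P ≠ 0 ∧ ∑ k, c k * P k = 0 := by
  by_cases h0 : c 0 = 0
  · exact ⟨![1, 0, 0], fun h => by simpa using congrFun h 0, by simp [Fin.sum_univ_three, h0]⟩
  · refine ⟨![c 1, - c 0, 0], fun h => h0 (by simpa using congrFun h 1), ?_⟩
    simp [Fin.sum_univ_three]; ring

end Cross

section Descent
variable {K : Type*} [Field K] [CharZero K] {n N : ℕ}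

lemma ev_ev (P : Fin 3 → K) (r : Fin 3 → MvPolynomial (Fin 3) K)
    (f : MvPolynomial (Fin 3) (MvPolynomial (Fin 3) K)) :
    eval P (eval r f) = eval (fun k => eval P (r k)) (map (eval P) f) := by
  rw [eval_map]
  have := eval₂_comp_left (eval P) (RingHom.id _) r f
  change eval P (eval₂ (RingHom.id _) r f) = _
  rw [this]
  rfl

lemma descent (Φ : Matrix (Fin n) (Fin N) (MvPolynomial (Fin 3) K))
    (f : Fin N → MvPolynomial (Fin 3) (MvPolynomial (Fin 3) K))
    (g : Fin n → MvPolynomial (Fin 3) (MvPolynomial (Fin 3) K))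
    (δ : MvPolynomial (Fin 3) K) (hδ : δ ≠ 0)
    (h1 : ∀ j, ∑ i, C (Φ j i) * f i = (∑ k, X k * C (X k)) * g j)
    (h2 : ∀ c, eval c δ ≠ 0 → ∀ P : Fin 3 → K, ∑ k, c k * P k = 0 → ∀ k l, ∃ r : K, ∀ i,
      P l * eval c (pderiv k (map (eval P) (f i))) - P k * eval c (pderiv l (map (eval P) (f i)))
        = r * eval c (map (eval P) (f i)))
    (h3 : ∀ c, eval c δ ≠ 0 → ∀ P : Fin 3 → K, P ≠ 0 → ∑ k, c k * P k = 0 →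
      ∃ i, eval c (map (eval P) (f i)) ≠ 0) :
    ∃ s : Fin N → MvPolynomial (Fin 3) K, Φ.mulVec s = 0 ∧
      ∀ c, eval c δ ≠ 0 → ∀ P : Fin 3 → K, P ≠ 0 → ∑ k, c k * P k = 0 →
        (∃ i, eval P (s i) ≠ 0) ∧ ∀ i j, eval P (s i) * eval c (map (eval P) (f j)) =
          eval P (s j) * eval c (map (eval P) (f i)) := by
  set F : (Fin 3 → K) → Fin N → MvPolynomial (Fin 3) K :=
    fun v i => eval (cr (fun k => X k) (fun k => C (v k))) (f i) with hF
  have hcr : ∀ P v : Fin 3 → K,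
      (fun k => eval P (cr (fun k => X k) (fun k => C (v k)) k)) = cr P v := by
    intro P v; funext k; fin_cases k <;> simp [cr]
  have hFe : ∀ v P i, eval P (F v i) = eval (cr P v) (map (eval P) (f i)) := by
    intro v P i
    rw [hF]; simp only
    rw [ev_ev, hcr]
  have hFk : ∀ v, Φ.mulVec (F v) = 0 := by
    intro v
    funext j
    have := congrArg (eval (cr (fun k => X k) (fun k => C (v k)))) (h1 j)
    simp only [map_sum, map_mul, eval_C, eval_X, cr_dot, zero_mul] at this
    simpa [Matrix.mulVec, dotProduct] using this
  obtain ⟨c1, hc1⟩ : ∃ c1, eval c1 δ ≠ 0 := by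
    by_contra hcon
    push Not at hcon
    exact hδ (MvPolynomial.funext fun x => by simp [hcon x])
  obtain ⟨P1, hP1, hcP1⟩ := exists_perp c1
  obtain ⟨v0, hv0⟩ := exists_cr hP1 hcP1
  have hpar : ∀ v i j, F v i * F v0 j = F v j * F v0 i := by
    intro v i j
    -- the polynomial `δ(x × v0)`
    set E : MvPolynomial (Fin 3) K := aeval (cr (fun k => X k) (fun k => C (v0 k))) δ with hE
    have hEe : ∀ P, eval P E = eval (cr P v0) δ := by
      intro P
      have := comp_aeval_apply (φ := MvPolynomial.aeval (R := K) P)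
        (f := cr (fun k => X k) (fun k => C (v0 k))) δ
      simp only [aeval_eq_eval, RingHom.coe_coe] at this
      rw [hE, this, hcr]
    have hE0 : E ≠ 0 := fun h => hc1 (by rw [← hv0, ← hEe, h, map_zero])
    have : E * (F v i * F v0 j - F v j * F v0 i) = 0 := by
      apply MvPolynomial.funext
      intro P
      simp only [map_mul, map_sub, map_zero, hFe, hEe]
      by_cases hz : eval (cr P v0) δ = 0
      · rw [hz, zero_mul]
      apply mul_eq_zero_of_right
      set α := cr P v0 with hα
      set w : Fin 3 → K := v - v0 with hw
      set β := cr P w with hβ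
      set ln : Fin 3 → Polynomial K :=
        fun k => Polynomial.C (α k) + Polynomial.X * Polynomial.C (β k) with hln
      have hWr : ∀ i j, aeval ln (map (eval P) (f i)) *
          Polynomial.derivative (aeval ln (map (eval P) (f j))) =
          Polynomial.derivative (aeval ln (map (eval P) (f i))) *
            aeval ln (map (eval P) (f j)) := by
        intro i j
        have hd0 : aeval ln δ ≠ 0 := fun h => hz (by
          have := eval_line α β δ 0
          rw [← hln, h] at this
          simpa using this.symm)
        rw [← sub_eq_zero]
        refine (mul_eq_zero.mp (?_ : aeval ln δ * _ = 0)).resolve_left hd0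
        apply Polynomial.funext
        intro t
        rw [hln, chain, chain]
        simp only [Polynomial.eval_mul, Polynomial.eval_sub, Polynomial.eval_finsetSum,
          Polynomial.eval_C, eval_line, Polynomial.eval_zero]
        set c : Fin 3 → K := fun k => α k + t * β k with hc
        by_cases hz' : eval c δ = 0
        · rw [hz', zero_mul]
        apply mul_eq_zero_of_right
        have hcP : ∑ k, c k * P k = 0 := by
          simp only [hc, add_mul, Finset.sum_add_distrib, mul_assoc, ← Finset.mul_sum]
          rw [hα, hβ, cr_dot, cr_dot]; simp
        obtain ⟨r0, hr0⟩ := h2 c hz' P hcP 0 1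
        obtain ⟨r1, hr1⟩ := h2 c hz' P hcP 2 0
        obtain ⟨r2, hr2⟩ := h2 c hz' P hcP 1 2
        have hsum : ∀ i, ∑ k, β k * eval c (pderiv k (map (eval P) (f i)))
            = (w 2 * r0 + w 1 * r1 + w 0 * r2) * eval c (map (eval P) (f i)) := by
          intro i
          rw [hβ, Fin.sum_univ_three]
          simp only [cr, Matrix.cons_val_zero, Matrix.cons_val_one, Matrix.cons_val]
          linear_combination w 2 * hr0 i + w 1 * hr1 i + w 0 * hr2 i
        rw [hsum, hsum]; ring
      have hfin := wronsk (hWr i j) 1 0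
      rw [hln, eval_line, eval_line, eval_line, eval_line] at hfin
      have e1 : (fun k => α k + 1 * β k) = cr P v := by
        funext k; fin_cases k <;> simp [hα, hβ, hw, cr] <;> ring
      have e0 : (fun k => α k + 0 * β k) = α := by simp
      rw [e0, e1] at hfin
      rw [sub_eq_zero, hfin, mul_comm]
    exact sub_eq_zero.mp ((mul_eq_zero.mp this).resolve_left hE0)
  have hF0 : F v0 ≠ 0 := by
    obtain ⟨i, hi⟩ := h3 c1 hc1 P1 hP1 hcP1
    intro h
    apply hi
    rw [← hv0, ← hFe, h]; simp
  obtain ⟨γ, s, hs, hprim⟩ := ufd_prim hF0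
  refine ⟨s, ?_, ?_⟩
  · have hγ : γ ≠ 0 := fun h => hF0 (by rw [hs, h, zero_smul])
    have := hFk v0
    rw [hs, Matrix.mulVec_smul] at this
    exact (smul_eq_zero.mp this).resolve_left hγ
  · intro c hc P hP hcP
    obtain ⟨v, hv⟩ := exists_cr hP hcP
    obtain ⟨r, hr⟩ := hprim (F v) (hpar v)
    have hval : ∀ i, eval c (map (eval P) (f i)) = eval P r * eval P (s i) := by
      intro i
      rw [← hv, ← hFe, hr]; simp
    refine ⟨?_, fun i j => by rw [hval, hval]; ring⟩
    obtain ⟨i, hi⟩ := h3 c hc P hP hcP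
    rw [hval] at hi
    exact ⟨i, right_ne_zero_of_mul hi⟩

end Descent
end WLP


namespace WLP

section Fam
variable {K : Type*} [Field K] {V W : Type*} [AddCommGroup V] [Module K V] [AddCommGroup W]
  [Module K W]

/-- affine-linear family of linear maps -/
def fam (T0 : V →ₗ[K] W) (Tk : Fin 3 → V →ₗ[K] W) (c : Fin 3 → K) : V →ₗ[K] W :=
  T0 + ∑ k, c k • Tk k

lemma mat_poly [FiniteDimensional K V] [FiniteDimensional K W] {ι κ : Type*} [Fintype ι]
    [Fintype κ] [DecidableEq ι]
    (bV : Module.Basis ι K V) (bW : Module.Basis κ K W)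
    (T0 : V →ₗ[K] W) (Tk : Fin 3 → V →ₗ[K] W) :
    ∃ M : Matrix κ ι (MvPolynomial (Fin 3) K),
      ∀ c, M.map (eval c) = LinearMap.toMatrix bV bW (fam T0 Tk c) := by
  refine ⟨Matrix.of fun j i => C (LinearMap.toMatrix bV bW T0 j i)
    + ∑ k, X k * C (LinearMap.toMatrix bV bW (Tk k) j i), fun c => ?_⟩
  ext j i
  rw [Matrix.map_apply]
  simp [fam, Fin.sum_univ_three, LinearMap.toMatrix_apply]

lemma det_poly [FiniteDimensional K V] (T0 : V →ₗ[K] V) (Tk : Fin 3 → V →ₗ[K] V) :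
    ∃ δ : MvPolynomial (Fin 3) K, ∀ c, eval c δ = LinearMap.det (fam T0 Tk c) := by
  obtain ⟨M, hM⟩ := mat_poly (Module.finBasis K V) (Module.finBasis K V) T0 Tk
  refine ⟨M.det, fun c => ?_⟩
  rw [RingHom.map_det, RingHom.mapMatrix_apply, hM, LinearMap.det_toMatrix]

lemma fam_comp {V' W' : Type*} [AddCommGroup V'] [Module K V'] [AddCommGroup W'] [Module K W']
    (B : W →ₗ[K] W') (B' : V' →ₗ[K] V)
    (T0 : V →ₗ[K] W) (Tk : Fin 3 → V →ₗ[K] W) (c : Fin 3 → K) :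
    B ∘ₗ fam T0 Tk c ∘ₗ B' = fam (B ∘ₗ T0 ∘ₗ B') (fun k => B ∘ₗ Tk k ∘ₗ B') c := by
  ext x
  simp [fam]

lemma inj_open [FiniteDimensional K V] (T0 : V →ₗ[K] W) (Tk : Fin 3 → V →ₗ[K] W) {c1 : Fin 3 → K}
    (h : Function.Injective (fam T0 Tk c1)) :
    ∃ δ : MvPolynomial (Fin 3) K, eval c1 δ ≠ 0 ∧
      ∀ c, eval c δ ≠ 0 → Function.Injective (fam T0 Tk c) := by
  obtain ⟨B, hB⟩ := LinearMap.exists_leftInverse_of_injective _ (LinearMap.ker_eq_bot.mpr h)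
  obtain ⟨δ, hδ⟩ := det_poly (B ∘ₗ T0 ∘ₗ LinearMap.id) (fun k => B ∘ₗ Tk k ∘ₗ LinearMap.id)
  refine ⟨δ, ?_, fun c hc => ?_⟩
  · rw [hδ, ← fam_comp, LinearMap.comp_id, hB, LinearMap.det_id]; exact one_ne_zero
  · rw [hδ, ← fam_comp, LinearMap.comp_id] at hc
    have : Function.Injective (B ∘ₗ fam T0 Tk c) := by
      have := ((LinearMap.isUnit_iff_isUnit_det _).mpr (isUnit_iff_ne_zero.mpr hc))
      exact ((Module.End.isUnit_iff _).mp this).1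
    exact Function.Injective.of_comp this

lemma surj_open [FiniteDimensional K W] (T0 : V →ₗ[K] W) (Tk : Fin 3 → V →ₗ[K] W) {c1 : Fin 3 → K}
    (h : Function.Surjective (fam T0 Tk c1)) :
    ∃ δ : MvPolynomial (Fin 3) K, eval c1 δ ≠ 0 ∧
      ∀ c, eval c δ ≠ 0 → Function.Surjective (fam T0 Tk c) := by
  obtain ⟨B, hB⟩ := LinearMap.exists_rightInverse_of_surjective _ (LinearMap.range_eq_top.mpr h)
  obtain ⟨δ, hδ⟩ := det_poly (LinearMap.id ∘ₗ T0 ∘ₗ B) (fun k => LinearMap.id ∘ₗ Tk k ∘ₗ B)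
  refine ⟨δ, ?_, fun c hc => ?_⟩
  · rw [hδ, ← fam_comp, LinearMap.id_comp, hB, LinearMap.det_id]; exact one_ne_zero
  · rw [hδ, ← fam_comp, LinearMap.id_comp] at hc
    have : Function.Surjective (fam T0 Tk c ∘ₗ B) := by
      have := ((LinearMap.isUnit_iff_isUnit_det _).mpr (isUnit_iff_ne_zero.mpr hc))
      exact ((Module.End.isUnit_iff _).mp this).2
    exact Function.Surjective.of_comp this

lemma poly_ne [Infinite K] {δ : MvPolynomial (Fin 3) K} (h : δ ≠ 0) : ∃ c, eval c δ ≠ 0 := by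
  by_contra hcon
  push Not at hcon
  exact h (MvPolynomial.funext fun x => by simp [hcon x])

/-- a matrix over a domain either has a kernel vector or a left pseudo-inverse -/
lemma mat_alt {A : Type*} [CommRing A] [IsDomain A] {ι κ : Type*} [Fintype ι] [Fintype κ]
    [DecidableEq ι] [DecidableEq κ] (M : Matrix κ ι A) :
    (∃ u, u ≠ 0 ∧ M.mulVec u = 0) ∨ ∃ (B : Matrix ι κ A) (δ : A), δ ≠ 0 ∧ B * M = δ • 1 := by
  by_cases hu : ∃ u, u ≠ 0 ∧ M.mulVec u = 0
  · exact Or.inl hu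
  right
  push Not at hu
  set F := FractionRing A
  have hinj : Function.Injective (M.map (algebraMap A F)).mulVec := by
    rw [Matrix.mulVec_injective_iff, ← LinearIndependent.iff_fractionRing (R := A),
      Fintype.linearIndependent_iff]
    intro g hg
    by_contra hne
    push Not at hne
    obtain ⟨i, hi⟩ := hne
    refine hu g (fun h => hi (by rw [h]; rfl)) ?_
    funext j
    apply IsFractionRing.injective A F
    have := congrFun hg j
    simp only [Finset.sum_apply, Pi.smul_apply, Algebra.smul_def] at this
    simp only [Matrix.mulVec, dotProduct, map_sum, map_mul, Pi.zero_apply, map_zero]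
    rw [← show _ = (0 : F) from this]
    exact Finset.sum_congr rfl fun i _ => by simp [Matrix.col, mul_comm]
  obtain ⟨B, hB⟩ : ∃ B : Matrix ι κ F, B * M.map (algebraMap A F) = 1 := by
    obtain ⟨B, hB⟩ := LinearMap.exists_leftInverse_of_injective (Matrix.toLin' (M.map (algebraMap A F)))
      (LinearMap.ker_eq_bot.mpr hinj)
    refine ⟨LinearMap.toMatrix' B, ?_⟩
    have := congrArg LinearMap.toMatrix' hB
    rwa [LinearMap.toMatrix'_comp, LinearMap.toMatrix'_toLin', LinearMap.toMatrix'_id] at this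
  obtain ⟨⟨s, hs⟩, hden⟩ := IsLocalization.exist_integer_multiples_of_finite (nonZeroDivisors A)
    (fun x : ι × κ => B x.1 x.2)
  choose B' hB' using hden
  refine ⟨Matrix.of fun i j => B' (i, j), s, nonZeroDivisors.ne_zero hs, ?_⟩
  ext i j
  apply IsFractionRing.injective A F
  have := congrFun (congrFun hB i) j
  rw [Matrix.mul_apply] at this ⊢
  simp only [Matrix.of_apply, map_sum, map_mul, hB', Algebra.smul_def, Matrix.smul_apply, Matrix.map_apply] at this ⊢
  simp only [mul_assoc, ← Finset.mul_sum, this]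
  simp [Matrix.one_apply]

lemma family [Infinite K] [FiniteDimensional K V] (T0 : V →ₗ[K] W) (Tk : Fin 3 → V →ₗ[K] W)
    {δ1 : MvPolynomial (Fin 3) K} (hδ1 : δ1 ≠ 0)
    (h : ∀ c, eval c δ1 ≠ 0 → ¬ Function.Injective (fam T0 Tk c)) {ι : Type*} [Fintype ι]
    (e : Module.Basis ι K V) :
    ∃ u : ι → MvPolynomial (Fin 3) K, u ≠ 0 ∧
      ∀ c, fam T0 Tk c (∑ b, eval c (u b) • e b) = 0 := by
  classical
  set W' : Submodule K W := LinearMap.range T0 ⊔ ⨆ k, LinearMap.range (Tk k) with hW'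
  have h0 : ∀ x, T0 x ∈ W' := fun x => le_sup_left (a := LinearMap.range T0) ⟨x, rfl⟩
  have hk : ∀ k x, Tk k x ∈ W' := fun k x => le_sup_right (a := LinearMap.range T0)
    (le_iSup (fun k => LinearMap.range (Tk k)) k ⟨x, rfl⟩)
  set S0 : V →ₗ[K] W' := T0.codRestrict W' h0
  set Sk : Fin 3 → V →ₗ[K] W' := fun k => (Tk k).codRestrict W' (hk k)
  have hS : ∀ c x, ((fam S0 Sk c x : W') : W) = fam T0 Tk c x := by
    intro c x
    simp [fam, S0, Sk]
  obtain ⟨M, hM⟩ := mat_poly e (Module.finBasis K W') S0 Sk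
  have hrep : ∀ c (v : ι → K), (M.map (eval c)).mulVec v = 0 → fam T0 Tk c (∑ b, v b • e b) = 0 := by
    intro c v hv
    rw [← hS, ZeroMemClass.coe_eq_zero]
    rw [hM] at hv
    have := LinearMap.toMatrix_mulVec_repr e (Module.finBasis K W') (fam S0 Sk c) (∑ b, v b • e b)
    rw [e.repr_sum_self, hv] at this
    apply (Module.finBasis K W').repr.injective
    ext i
    rw [← congrFun this i]
    simp
  rcases mat_alt M with ⟨u, hu, hMu⟩ | ⟨B, δ, hδ, hB⟩
  · refine ⟨u, hu, fun c => hrep c _ ?_⟩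
    funext j
    have := congrArg (eval c) (congrFun hMu j)
    simp [Matrix.mulVec, dotProduct] at this ⊢
    exact this
  · exfalso
    obtain ⟨c, hc⟩ := poly_ne (mul_ne_zero hδ1 hδ)
    rw [map_mul] at hc
    apply h c (left_ne_zero_of_mul hc)
    rw [injective_iff_map_eq_zero]
    intro x hx
    have h1 : (M.map (eval c)).mulVec (e.repr x) = 0 := by
      rw [hM, LinearMap.toMatrix_mulVec_repr]
      have : fam S0 Sk c x = 0 := by rw [← ZeroMemClass.coe_eq_zero, hS, hx]
      rw [this]; simp
    have h2 : (B.map (eval c)) * (M.map (eval c)) = eval c δ • 1 := by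
      rw [← Matrix.map_mul, hB]
      ext i j
      simp [Matrix.one_apply]
      split_ifs <;> simp
    have h3 := congrArg (fun Z => Z.mulVec (e.repr x)) h2
    simp only [← Matrix.mulVec_mulVec, h1, Matrix.mulVec_zero, Matrix.smul_mulVec,
      Matrix.one_mulVec] at h3
    have h4 := (smul_eq_zero.mp h3.symm).resolve_left (right_ne_zero_of_mul hc)
    apply e.repr.injective
    ext i
    rw [map_zero]
    exact congrFun h4 i

end Fam
end WLP


namespace WLP

section Theta
variable {K : Type*} [Field K]

noncomputable def thv (c : Fin 3 → K) : Fin 3 → MvPolynomial (Fin 2) K :=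
  ![X 0, X 1, -(C (c 0 / c 2) * X 0 + C (c 1 / c 2) * X 1)]

/-- restriction to the line `c` -/
noncomputable def th (c : Fin 3 → K) : MvPolynomial (Fin 3) K →ₐ[K] MvPolynomial (Fin 2) K :=
  aeval (thv c)

noncomputable def io : MvPolynomial (Fin 2) K →ₐ[K] MvPolynomial (Fin 3) K := aeval ![X 0, X 1]

lemma WH_thv (c : Fin 3 → K) (k : Fin 3) : WH (thv c k) 1 := by
  fin_cases k
  · exact WH_X 0
  · exact WH_X 1
  · exact (((WH_X 0).Cmul _).add ((WH_X 1).Cmul _)).neg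

lemma WH_th (c : Fin 3 → K) {r : MvPolynomial (Fin 3) K} {D : ℤ} (h : WH r D) : WH (th c r) D :=
  h.aeval (WH_thv c)

lemma WH_io {r : MvPolynomial (Fin 2) K} {D : ℤ} (h : WH r D) : WH (io r) D :=
  h.aeval (fun i => by fin_cases i; exacts [WH_X 0, WH_X 1])

lemma th_io (c : Fin 3 → K) (r : MvPolynomial (Fin 2) K) : th c (io r) = r := by
  have : (th c).comp io = AlgHom.id K _ := by
    ext i; fin_cases i <;> simp [th, io, thv]
  exact DFunLike.congr_fun this r

lemma eval_io (P : Fin 3 → K) (r : MvPolynomial (Fin 2) K) :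
    eval P (io r) = eval ![P 0, P 1] r := by
  have : (aeval (R := K) P).comp io = aeval ![P 0, P 1] := by
    ext i; fin_cases i <;> simp [io]
  have := DFunLike.congr_fun this r
  simpa [aeval_eq_eval] using this

lemma th_lin {c : Fin 3 → K} (hc : c 2 ≠ 0) : th c (linform c) = 0 := by
  have h : (C (c 2) : MvPolynomial (Fin 2) K) * C (c 0 / c 2) = C (c 0) := by
    rw [← C_mul]; congr 1; field_simp
  have h' : (C (c 2) : MvPolynomial (Fin 2) K) * C (c 1 / c 2) = C (c 1) := by
    rw [← C_mul]; congr 1; field_simp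
  simp only [linform, Fin.sum_univ_three, th, thv, map_add, map_mul, aeval_X, algHom_C,
    algebraMap_eq, Matrix.cons_val_zero, Matrix.cons_val_one, Matrix.cons_val]
  linear_combination (- X 0) * h - X 1 * h'

lemma lin_ne {c : Fin 3 → K} (hc : c 2 ≠ 0) : linform c ≠ 0 := by
  intro h
  apply hc
  have := congrArg (eval ![(0:K), 0, 1]) h
  simpa [linform, Fin.sum_univ_three] using this

lemma decomp {c : Fin 3 → K} (hc : c 2 ≠ 0) {r : MvPolynomial (Fin 3) K} {D : ℤ} (h : WH r D) :
    ∃ q, WH q (D - 1) ∧ r = io (th c r) + linform c * q := by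
  set I := Ideal.span {linform c}
  have h0 : Ideal.Quotient.mkₐ K I (linform c) = 0 := by
    simp only [Ideal.Quotient.mkₐ_eq_mk]
    exact Ideal.Quotient.eq_zero_iff_mem.mpr (Ideal.mem_span_singleton_self _)
  have key : (Ideal.Quotient.mkₐ K I).comp (io.comp (th c)) = Ideal.Quotient.mkₐ K I := by
    ext i
    fin_cases i
    · simp [th, thv, io]
    · simp [th, thv, io]
    · have e : io (th c (X 2)) = X 2 - C (c 2)⁻¹ * linform c := by
        have h : (C (c 2)⁻¹ : MvPolynomial (Fin 3) K) * C (c 0) = C (c 0 / c 2) := by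
          rw [← C_mul]; congr 1; field_simp
        have h' : (C (c 2)⁻¹ : MvPolynomial (Fin 3) K) * C (c 1) = C (c 1 / c 2) := by
          rw [← C_mul]; congr 1; field_simp
        have h'' : (C (c 2)⁻¹ : MvPolynomial (Fin 3) K) * C (c 2) = 1 := by
          rw [← C_mul, inv_mul_cancel₀ hc, C_1]
        simp only [linform, Fin.sum_univ_three, th, thv, io, map_add, map_neg, map_mul, aeval_X,
          algHom_C, algebraMap_eq, Matrix.cons_val_zero, Matrix.cons_val_one, Matrix.cons_val]
        linear_combination X 0 * h + X 1 * h' + X 2 * h''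
      change Ideal.Quotient.mkₐ K I (io (th c (X 2))) = Ideal.Quotient.mkₐ K I (X 2)
      rw [e, map_sub, map_mul, h0, mul_zero, sub_zero]
  have hr := DFunLike.congr_fun key r
  have hmem : r - io (th c r) ∈ I := by
    rw [← Ideal.Quotient.eq_zero_iff_mem, map_sub, sub_eq_zero]
    exact hr.symm
  obtain ⟨q, hq⟩ := Ideal.mem_span_singleton.mp hmem
  refine ⟨q, WH.of_mul (homog_linform c) (lin_ne hc) ?_, by rw [← hq]; ring⟩
  rw [← hq]
  exact h.sub (WH_io (WH_th c h))

lemma eval_th {c : Fin 3 → K} (hc : c 2 ≠ 0) {P : Fin 3 → K} (h : ∑ k, c k * P k = 0)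
    (r : MvPolynomial (Fin 3) K) : eval ![P 0, P 1] (th c r) = eval P r := by
  have : (aeval (R := K) ![P 0, P 1]).comp (th c) = aeval P := by
    rw [Fin.sum_univ_three] at h
    ext i; fin_cases i
    · simp [th, thv]
    · simp [th, thv]
    · simp [th, thv]; field_simp; linear_combination -h
  have := DFunLike.congr_fun this r
  simpa [aeval_eq_eval] using this

lemma comp_th (c : Fin 3 → K) (r : MvPolynomial (Fin 3) K) (D : ℤ) :
    th c (weightedHomogeneousComponent (fun _ : Fin 3 => (1 : ℤ)) D r) =
      weightedHomogeneousComponent (fun _ : Fin 2 => (1 : ℤ)) D (th c r) := by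
  induction r using MvPolynomial.induction_on' with
  | add p q hp hq => simp only [map_add, hp, hq]
  | monomial m x =>
    have h1 : WH (monomial m x) (Finsupp.weight (fun _ : Fin 3 => (1 : ℤ)) m) :=
      isWeightedHomogeneous_monomial _ _ _ rfl
    by_cases hD : Finsupp.weight (fun _ : Fin 3 => (1 : ℤ)) m = D
    · rw [hD] at h1
      rw [weightedHomogeneousComponent_eq_self h1,
        weightedHomogeneousComponent_eq_self (WH_th c h1)]
    · rw [IsWeightedHomogeneous.weightedHomogeneousComponent_ne _ h1 (Ne.symm hD),
        IsWeightedHomogeneous.weightedHomogeneousComponent_ne _ (WH_th c h1) (Ne.symm hD), map_zero]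

variable {n N : ℕ} {a : Fin N → ℤ} {b : Fin n → ℤ}
  {Φ : Matrix (Fin n) (Fin N) (MvPolynomial (Fin 3) K)}

lemma th_mulVec (c : Fin 3 → K) (u : Fin N → MvPolynomial (Fin 3) K) (j : Fin n) :
    (Φ.map (th c)).mulVec (fun i => th c (u i)) j = th c (Φ.mulVec u j) := by
  simp [Matrix.mulVec, dotProduct]

def Inj' (Φ : Matrix (Fin n) (Fin N) (MvPolynomial (Fin 3) K)) (a : Fin N → ℤ) (b : Fin n → ℤ)
    (c : Fin 3 → K) (d : ℤ) : Prop :=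
  ∀ g : Fin n → MvPolynomial (Fin 3) K, (∀ j, WH (g j) (d - 1 - b j)) →
    ∀ u : Fin N → MvPolynomial (Fin 3) K, (∀ i, WH (u i) (d - a i)) →
      Φ.mulVec u = linform c • g →
      ∃ v : Fin N → MvPolynomial (Fin 3) K, (∀ i, WH (v i) (d - 1 - a i)) ∧ Φ.mulVec v = g

def Surj' (Φ : Matrix (Fin n) (Fin N) (MvPolynomial (Fin 3) K)) (a : Fin N → ℤ) (b : Fin n → ℤ)
    (c : Fin 3 → K) (d : ℤ) : Prop :=
  ∀ g : Fin n → MvPolynomial (Fin 3) K, (∀ j, WH (g j) (d - b j)) →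
    ∃ (g' : Fin n → MvPolynomial (Fin 3) K) (u : Fin N → MvPolynomial (Fin 3) K),
      (∀ j, WH (g' j) (d - 1 - b j)) ∧ (∀ i, WH (u i) (d - a i)) ∧
        g = linform c • g' + Φ.mulVec u

lemma sur_fin (hfin : ∃ D0 : ℤ, ∀ D ≥ D0, ∀ g : Fin n → MvPolynomial (Fin 3) K,
      (∀ j, WH (g j) (D - b j)) → ∃ u : Fin N → MvPolynomial (Fin 3) K,
        (∀ i, WH (u i) (D - a i)) ∧ Φ.mulVec u = g) (c : Fin 3 → K) :
    ∃ D0 : ℤ, ∀ D ≥ D0, Sur (Φ.map (th c)) a b D := by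
  obtain ⟨D0, h⟩ := hfin
  refine ⟨D0, fun D hD g hg => ?_⟩
  obtain ⟨u, hu, hug⟩ := h D hD (fun j => io (g j)) (fun j => WH_io (hg j))
  refine ⟨fun i => th c (u i), fun i => WH_th c (hu i), funext fun j => ?_⟩
  rw [th_mulVec, hug, th_io]

lemma lift_zero {c : Fin 3 → K} (hc : c 2 ≠ 0) {M : ℕ} {a : Fin M → ℤ} {d : ℤ}
    {u : Fin M → MvPolynomial (Fin 3) K}
    (hu : ∀ i, WH (u i) (d - a i)) (h0 : ∀ i, th c (u i) = 0) :
    ∃ v : Fin M → MvPolynomial (Fin 3) K, (∀ i, WH (v i) (d - 1 - a i)) ∧ u = linform c • v := by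
  choose v hv hv' using fun i => decomp hc (hu i)
  refine ⟨v, fun i => WH.cast (hv i) (by ring), funext fun i => ?_⟩
  conv_lhs => rw [hv' i, h0 i, map_zero, zero_add]
  rfl

lemma WH_mulVec (hΦ : ∀ j i, WH (Φ j i) (a i - b j)) {d : ℤ} {u : Fin N → MvPolynomial (Fin 3) K}
    (hu : ∀ i, WH (u i) (d - a i)) (j : Fin n) : WH (Φ.mulVec u j) (d - b j) :=
  IsWeightedHomogeneous.sum _ _ _ fun i _ => WH.cast ((hΦ j i).mul (hu i)) (by ring)

lemma surj_of_Sur (hΦ : ∀ j i, WH (Φ j i) (a i - b j)) {c : Fin 3 → K} (hc : c 2 ≠ 0) {d : ℤ}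
    (h : Sur (Φ.map (th c)) a b d) : Surj' Φ a b c d := by
  intro g hg
  obtain ⟨u, hu, hug⟩ := h (fun j => th c (g j)) fun j => WH_th c (hg j)
  have hu' : ∀ i, WH (io (u i)) (d - a i) := fun i => WH_io (hu i)
  obtain ⟨g', hg', hgg⟩ := lift_zero hc (u := g - Φ.mulVec fun i => io (u i)) (a := b) (d := d)
    (fun j => (hg j).sub (WH_mulVec hΦ hu' j)) (fun j => by
      rw [Pi.sub_apply, map_sub, ← th_mulVec]
      simp only [th_io]
      rw [hug, sub_self])
  exact ⟨g', _, hg', hu', by rw [← hgg]; abel⟩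

lemma inj_of_lift {c : Fin 3 → K} (hc : c 2 ≠ 0) {d : ℤ}
    (h : ∀ f, Ker (Φ.map (th c)) a d f → ∃ s : Fin N → MvPolynomial (Fin 3) K,
      (∀ i, WH (s i) (d - a i)) ∧ Φ.mulVec s = 0 ∧ ∀ i, th c (s i) = f i) : Inj' Φ a b c d := by
  intro g hg u hu hug
  obtain ⟨s, hs, hs0, hsu⟩ := h (fun i => th c (u i)) ⟨fun i => WH_th c (hu i), funext fun j => by
    rw [th_mulVec, hug]
    simp [th_lin hc]⟩
  obtain ⟨v, hv, huv⟩ := lift_zero hc (u := u - s) (fun i => (hu i).sub (hs i)) (fun i => by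
    simp [hsu])
  refine ⟨v, hv, ?_⟩
  have : Φ.mulVec (u - s) = linform c • g := by rw [Matrix.mulVec_sub, hs0, hug, sub_zero]
  rw [huv, Matrix.mulVec_smul] at this
  exact smul_right_injective _ (lin_ne hc) this

end Theta
end WLP


namespace WLP

section Main
variable {K : Type*} [Field K]

lemma fd_pi {N : ℕ} {M : Type*} [AddCommGroup M] [Module K M] (p : Fin N → Submodule K M)
    (h : ∀ i, FiniteDimensional K (p i)) : FiniteDimensional K (Submodule.pi Set.univ p) := by
  let F : ↥(Submodule.pi Set.univ p) →ₗ[K] (∀ i, ↥(p i)) :=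
    { toFun := fun x i => ⟨x.1 i, x.2 i (Set.mem_univ _)⟩
      map_add' := fun _ _ => rfl
      map_smul' := fun _ _ => rfl }
  refine Module.Finite.of_injective F fun x y hxy => ?_
  ext i : 2
  exact congrArg Subtype.val (congrFun hxy i)

lemma fd_prod {M M' : Type*} [AddCommGroup M] [Module K M] [AddCommGroup M'] [Module K M']
    (p : Submodule K M) (q : Submodule K M') (hp : FiniteDimensional K p)
    (hq : FiniteDimensional K q) : FiniteDimensional K (p.prod q) := by
  let F : ↥(p.prod q) →ₗ[K] (p × q) :=
    { toFun := fun x => (⟨x.1.1, x.2.1⟩, ⟨x.1.2, x.2.2⟩)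
      map_add' := fun _ _ => rfl
      map_smul' := fun _ _ => rfl }
  refine Module.Finite.of_injective F fun x y hxy => ?_
  ext1
  exact Prod.ext (congrArg (fun z => z.1.1) hxy) (congrArg (fun z => z.2.1) hxy)

variable {n N : ℕ}

/-- source of the auxiliary family of maps -/
noncomputable def Vs (a : Fin N → ℤ) (b : Fin n → ℤ) (e : ℤ) :
    Submodule K ((Fin N → MvPolynomial (Fin 2) K) × (Fin n → MvPolynomial (Fin 3) K)) :=
  (Submodule.pi Set.univ fun i =>
    weightedHomogeneousSubmodule K (fun _ : Fin 2 => (1 : ℤ)) (e - a i)).prod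
    (degPiece n b (e - 1))

lemma fd_degPiece (b : Fin n → ℤ) (e : ℤ) : FiniteDimensional K (degPiece (K := K) n b e) :=
  fd_pi _ fun _ => fd_WH _

lemma fd_Vs (a : Fin N → ℤ) (b : Fin n → ℤ) (e : ℤ) : FiniteDimensional K (Vs (K := K) a b e) :=
  fd_prod _ _ (fd_pi _ fun _ => fd_WH _) (fd_degPiece _ _)

lemma mem_Vs {a : Fin N → ℤ} {b : Fin n → ℤ} {e : ℤ}
    {x : (Fin N → MvPolynomial (Fin 2) K) × (Fin n → MvPolynomial (Fin 3) K)} :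
    x ∈ Vs a b e ↔ (∀ i, WH (x.1 i) (e - a i)) ∧ ∀ j, WH (x.2 j) (e - 1 - b j) := by
  rw [Vs, Submodule.mem_prod, mem_degPiece]
  simp [Submodule.mem_pi, mem_weightedHomogeneousSubmodule, homog]

/-- constant part -/
noncomputable def TT0 (Φ : Matrix (Fin n) (Fin N) (MvPolynomial (Fin 3) K)) (a : Fin N → ℤ) (b : Fin n → ℤ) (e : ℤ) :
    Vs (K := K) a b e →ₗ[K] (Fin n → MvPolynomial (Fin 3) K) where
  toFun x := Φ.mulVec fun i => io (x.1.1 i)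
  map_add' x y := by
    rw [← Matrix.mulVec_add]; congr 1; funext i; simp
  map_smul' r x := by
    rw [RingHom.id_apply, ← Matrix.mulVec_smul]; congr 1; funext i; simp

noncomputable def TTk (a : Fin N → ℤ) (b : Fin n → ℤ) (e : ℤ) (k : Fin 3) :
    Vs (K := K) a b e →ₗ[K] (Fin n → MvPolynomial (Fin 3) K) where
  toFun x := - ((X k : MvPolynomial (Fin 3) K) • x.1.2)
  map_add' x y := by
    funext j; simp; ring
  map_smul' r x := by
    funext j; simp

variable {a : Fin N → ℤ} {b : Fin n → ℤ} {Φ : Matrix (Fin n) (Fin N) (MvPolynomial (Fin 3) K)}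

lemma fam_TT (e : ℤ) (c : Fin 3 → K) (x : Vs (K := K) a b e) :
    fam (TT0 Φ a b e) (TTk a b e) c x =
      (Φ.mulVec fun i => io (x.1.1 i)) - linform c • x.1.2 := by
  funext j
  simp [fam, TT0, TTk, linform, Fin.sum_univ_three, smul_eq_C_mul]
  ring

lemma fam_Ker {e : ℤ} {c : Fin 3 → K} (hc : c 2 ≠ 0) {x : Vs (K := K) a b e}
    (hx : fam (TT0 Φ a b e) (TTk a b e) c x = 0) : Ker (Φ.map (th c)) a e x.1.1 := by
  refine ⟨(mem_Vs.mp x.2).1, ?_⟩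
  rw [fam_TT, sub_eq_zero] at hx
  funext j
  have := congrArg (th c) (congrFun hx j)
  rw [← th_mulVec] at this
  simp only [th_io] at this
  rw [this]
  simp [th_lin hc]

lemma fam_zero {e : ℤ} {c : Fin 3 → K} (hc : c 2 ≠ 0) {x : Vs (K := K) a b e}
    (hx : fam (TT0 Φ a b e) (TTk a b e) c x = 0) (h0 : x.1.1 = 0) : x = 0 := by
  rw [fam_TT, h0] at hx
  have h2 : x.1.2 = 0 := by
    have : linform c • x.1.2 = 0 := by
      rw [← neg_eq_zero, ← hx]
      funext j
      simp [Matrix.mulVec, dotProduct]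
    exact (smul_eq_zero.mp this).resolve_left (lin_ne hc)
  ext1
  exact Prod.ext h0 h2

lemma Ker_fam (hΦ : ∀ j i, WH (Φ j i) (a i - b j)) {e : ℤ} {c : Fin 3 → K} (hc : c 2 ≠ 0)
    {f : Fin N → MvPolynomial (Fin 2) K} (hf : Ker (Φ.map (th c)) a e f) :
    ∃ x : Vs (K := K) a b e, fam (TT0 Φ a b e) (TTk a b e) c x = 0 ∧ x.1.1 = f := by
  have hf' : ∀ i, WH (io (f i)) (e - a i) := fun i => WH_io (hf.1 i)
  obtain ⟨g, hg, hg'⟩ := lift_zero hc (u := Φ.mulVec fun i => io (f i)) (a := b) (d := e)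
    (WH_mulVec hΦ hf') (fun j => by
      rw [← th_mulVec]
      simp only [th_io]
      rw [hf.2]; rfl)
  refine ⟨⟨(f, g), mem_Vs.mpr ⟨hf.1, hg⟩⟩, ?_, rfl⟩
  rw [fam_TT, sub_eq_zero]
  exact hg'

lemma inj_iff (hΦ : ∀ j i, WH (Φ j i) (a i - b j)) {e : ℤ} {c : Fin 3 → K} (hc : c 2 ≠ 0) :
    Function.Injective (fam (TT0 Φ a b e) (TTk a b e) c) ↔
      ∀ f, Ker (Φ.map (th c)) a e f → f = 0 := by
  rw [injective_iff_map_eq_zero]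
  constructor
  · intro h f hf
    obtain ⟨x, hx, rfl⟩ := Ker_fam hΦ hc hf
    rw [h x hx]; rfl
  · intro h x hx
    exact fam_zero hc hx (h _ (fam_Ker hc hx))

lemma Ker_down {A : Matrix (Fin n) (Fin N) (MvPolynomial (Fin 2) K)} {p : ℤ}
    (h : ∀ f, Ker A a (p - 1) f → f = 0) : ∀ D < p, ∀ f, Ker A a D f → f = 0 := by
  intro D hD f hf
  have h1 := h _ ((hf.smul (WH_Xpow 0 (p - 1 - D).toNat)).cast (by lia))
  exact (smul_eq_zero.mp h1).resolve_left (pow_ne_zero _ (X_ne_zero _))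

/-- the polynomial family attached to a coefficient vector -/
noncomputable def pf {ι : Type*} [Fintype ι] (u : ι → MvPolynomial (Fin 3) K)
    (q : ι → MvPolynomial (Fin 3) K) : MvPolynomial (Fin 3) (MvPolynomial (Fin 3) K) :=
  ∑ b, map C (u b) * C (q b)

lemma eval_pf {ι : Type*} [Fintype ι] (u q : ι → MvPolynomial (Fin 3) K) (c : Fin 3 → K) :
    eval (fun k => C (c k)) (pf u q) = ∑ b, eval c (u b) • q b := by
  rw [pf, map_sum]
  refine Finset.sum_congr rfl fun b _ => ?_
  rw [map_mul, eval_C, smul_eq_C_mul]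
  congr 1
  rw [eval_map]
  change eval₂ C (C ∘ c) (u b) = _
  rw [← eval₂_comp]

lemma pderiv_pf {ι : Type*} [Fintype ι] (u q : ι → MvPolynomial (Fin 3) K) (k : Fin 3) :
    pderiv k (pf u q) = pf (fun b => pderiv k (u b)) q := by
  rw [pf, pf, map_sum]
  refine Finset.sum_congr rfl fun b _ => ?_
  rw [Derivation.leibniz, pderiv_C, smul_zero, zero_add, smul_eq_mul, mul_comm, pderiv_map]

lemma eval_map_eq [CharZero K] (c P : Fin 3 → K) (f : MvPolynomial (Fin 3) (MvPolynomial (Fin 3) K)) :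
    eval c (map (eval P) f) = eval P (eval (fun k => C (c k)) f) := by
  rw [ev_ev]; simp

end Main
end WLP


namespace WLP

section Fixed
variable {K : Type*} [Field K] [IsAlgClosed K] [CharZero K] {n : ℕ} {a : Fin (n + 2) → ℤ}
  {b : Fin n → ℤ} {Φ : Matrix (Fin n) (Fin (n + 2)) (MvPolynomial (Fin 3) K)}

set_option maxHeartbeats 1000000 in
/-- the family of low-degree syzygies produces a global syzygy restricting to it on each line -/
lemma global_syz (hΦ : ∀ j i, WH (Φ j i) (a i - b j))
    (hs : ∀ c : Fin 3 → K, ∃ D0 : ℤ, ∀ D ≥ D0, Sur (Φ.map (th c)) a b D) {d p : ℤ} (hpd : p ≤ d)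
    (hns : ∀ c : Fin 3 → K, c 2 ≠ 0 → ¬ Sur (Φ.map (th c)) a b d)
    {δ1 : MvPolynomial (Fin 3) K} (hδ1 : δ1 ≠ 0)
    (hmin : ∀ c : Fin 3 → K, c 2 ≠ 0 → eval c δ1 ≠ 0 →
      ∀ D < p, ∀ f, Ker (Φ.map (th c)) a D f → f = 0)
    (hne : ∀ c : Fin 3 → K, c 2 ≠ 0 → eval c δ1 ≠ 0 →
      ∃ f, Ker (Φ.map (th c)) a p f ∧ f ≠ 0) :
    ∃ (c : Fin 3 → K) (_ : c 2 ≠ 0) (_ : eval c δ1 ≠ 0) (f : Fin (n + 2) → MvPolynomial (Fin 2) K)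
      (s : Fin (n + 2) → MvPolynomial (Fin 3) K),
      Ker (Φ.map (th c)) a p f ∧ f ≠ 0 ∧ Φ.mulVec s = 0 ∧
      ∀ P : Fin 3 → K, P ≠ 0 → ∑ k, c k * P k = 0 → (∃ i, eval P (s i) ≠ 0) ∧
        ∀ i j, eval P (s i) * eval ![P 0, P 1] (f j) = eval P (s j) * eval ![P 0, P 1] (f i) := by
  have := fd_Vs (K := K) a b p
  set e := Module.finBasis K (Vs (K := K) a b p) with he
  have hδ2 : X 2 * δ1 ≠ 0 := mul_ne_zero (X_ne_zero _) hδ1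
  obtain ⟨u, hu0, hu⟩ := family (TT0 Φ a b p) (TTk a b p) hδ2 (fun c hc hinj => by
    simp only [map_mul, eval_X] at hc
    obtain ⟨f, hf, hf0⟩ := hne c (left_ne_zero_of_mul hc) (right_ne_zero_of_mul hc)
    exact hf0 ((inj_iff hΦ (left_ne_zero_of_mul hc)).mp hinj f hf)) e
  obtain ⟨b0, hb0⟩ := Function.ne_iff.mp hu0
  simp only [Pi.zero_apply] at hb0
  -- elements of the family
  set xx : (Fin _ → MvPolynomial (Fin 3) K) → (Fin 3 → K) → Vs (K := K) a b p :=
    fun w c => ∑ b, eval c (w b) • e b with hxx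
  have hux : ∀ c, fam (TT0 Φ a b p) (TTk a b p) c (xx u c) = 0 := hu
  have hxb : ∀ c, xx u c = 0 → eval c (u b0) = 0 := fun c h =>
    Fintype.linearIndependent_iff.mp e.linearIndependent _ h b0
  have hx1 : ∀ w c i, io ((xx w c).1.1 i) = ∑ b, eval c (w b) • io ((e b).1.1 i) := by
    intro w c i
    simp [hxx, Prod.fst_sum, Finset.sum_apply]
  have hx2 : ∀ w c j, (xx w c).1.2 j = ∑ b, eval c (w b) • (e b).1.2 j := by
    intro w c i
    simp [hxx, Prod.snd_sum, Finset.sum_apply]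
  clear_value xx
  set f : Fin (n + 2) → MvPolynomial (Fin 3) (MvPolynomial (Fin 3) K) :=
    fun i => pf u (fun b => io ((e b).1.1 i)) with hf
  set g : Fin n → MvPolynomial (Fin 3) (MvPolynomial (Fin 3) K) :=
    fun j => pf u (fun b => (e b).1.2 j) with hg
  have hfe : ∀ c i, eval (fun k => C (c k)) (f i) = io ((xx u c).1.1 i) := fun c i => by
    rw [hx1, ← eval_pf]
  have hge : ∀ c j, eval (fun k => C (c k)) (g j) = (xx u c).1.2 j := fun c i => by
    rw [hx2, ← eval_pf]
  have hfd : ∀ c k i, eval (fun k => C (c k)) (pderiv k (f i)) =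
      io ((xx (fun b => pderiv k (u b)) c).1.1 i) := fun c k i => by
    rw [hx1, ← eval_pf, hf, pderiv_pf]
  have hgd : ∀ c k j, eval (fun k => C (c k)) (pderiv k (g j)) =
      (xx (fun b => pderiv k (u b)) c).1.2 j := fun c k i => by
    rw [hx2, ← eval_pf, hg, pderiv_pf]
  have hlin : ∀ c : Fin 3 → K, eval (fun k => C (c k)) (∑ k, X k * C (X k)) = linform c := by
    intro c; simp [linform]
  have h1 : ∀ j, ∑ i, C (Φ j i) * f i = (∑ k, X k * C (X k)) * g j := by
    intro j
    apply MvPolynomial.funext_set (fun _ : Fin 3 => Set.range (C : K → MvPolynomial (Fin 3) K))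
      (fun _ => Set.infinite_range_of_injective (C_injective _ _))
    intro x hx
    choose c hc using fun k => hx k (Set.mem_univ k)
    obtain rfl : (fun k => C (c k)) = x := funext hc
    rw [map_mul, hlin, hge, map_sum]
    simp only [map_mul, eval_C, hfe]
    have := congrFun (hux c) j
    rw [fam_TT, Pi.sub_apply, Pi.zero_apply, sub_eq_zero] at this
    exact this
  -- differentiated identity
  have h1d : ∀ c k j, Φ.mulVec (fun i => io ((xx (fun b => pderiv k (u b)) c).1.1 i)) j =
      linform c * (xx (fun b => pderiv k (u b)) c).1.2 j + X k * (xx u c).1.2 j := by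
    intro c k j
    have h := congrArg (fun q => eval (fun k => C (c k)) (pderiv k q)) (h1 j)
    simp only [map_sum (pderiv k), Derivation.leibniz, pderiv_C, smul_zero, add_zero, pderiv_X,
      smul_eq_mul, map_add, map_mul, hlin, hgd, hge, mul_zero, zero_add, eval_C] at h
    rw [map_sum] at h
    simp only [map_mul, eval_C, hfd] at h
    rw [Matrix.mulVec, dotProduct, h]
    congr 1
    rw [mul_comm]
    congr 1
    simp [Pi.single_apply]
  set δ := X 2 * δ1 * u b0 with hδ
  have hδ0 : δ ≠ 0 := mul_ne_zero hδ2 hb0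
  have hδc : ∀ c, eval c δ ≠ 0 → c 2 ≠ 0 ∧ eval c δ1 ≠ 0 ∧ eval c (u b0) ≠ 0 := by
    intro c hc
    simp only [hδ, map_mul, eval_X] at hc
    exact ⟨left_ne_zero_of_mul (left_ne_zero_of_mul hc),
      right_ne_zero_of_mul (left_ne_zero_of_mul hc), right_ne_zero_of_mul hc⟩
  have hK : ∀ c, c 2 ≠ 0 → Ker (Φ.map (th c)) a p (xx u c).1.1 := fun c hc => fam_Ker hc (hux c)
  have hK0 : ∀ c, eval c δ ≠ 0 → (xx u c).1.1 ≠ 0 := by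
    intro c hc h0
    obtain ⟨hc2, -, hcu⟩ := hδc c hc
    have h := fam_zero hc2 (hux c) h0
    exact hcu (hxb c h)
  have hval : ∀ c P i, eval c (map (eval P) (f i)) = eval ![P 0, P 1] ((xx u c).1.1 i) := by
    intro c P i
    rw [eval_map_eq, hfe, eval_io]
  have hvald : ∀ c P k i, eval c (pderiv k (map (eval P) (f i))) =
      eval ![P 0, P 1] ((xx (fun b => pderiv k (u b)) c).1.1 i) := by
    intro c P k i
    rw [pderiv_map, eval_map_eq, hfd, eval_io]
  obtain ⟨s, hs0, hs1⟩ := descent Φ f g δ hδ0 h1 (by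
    intro c hc P hP k l
    obtain ⟨hc2, hc1, -⟩ := hδc c hc
    have hker : Ker (Φ.map (th c)) a (p + 1)
        (th c (X l) • (xx (fun b => pderiv k (u b)) c).1.1
          - th c (X k) • (xx (fun b => pderiv l (u b)) c).1.1) := by
      refine ⟨fun i => ?_, ?_⟩
      · refine IsWeightedHomogeneous.sub ?_ ?_
        · exact WH.cast ((WH_th c (WH_X l)).mul
            ((mem_Vs.mp (xx (fun b => pderiv k (u b)) c).2).1 i)) (by ring)
        · exact WH.cast ((WH_th c (WH_X k)).mul
            ((mem_Vs.mp (xx (fun b => pderiv l (u b)) c).2).1 i)) (by ring)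
      · have hA : ∀ k j, (Φ.map (th c)).mulVec ((xx (fun b => pderiv k (u b)) c).1.1) j =
            th c (X k) * th c ((xx u c).1.2 j) := by
          intro k j
          have := congrArg (th c) (h1d c k j)
          rw [← th_mulVec] at this
          simp only [th_io, map_add, map_mul, th_lin hc2, zero_mul, zero_add] at this
          exact this
        funext j
        rw [Matrix.mulVec_sub, Matrix.mulVec_smul, Matrix.mulVec_smul]
        simp only [Pi.sub_apply, Pi.smul_apply, smul_eq_mul, hA, Pi.zero_apply]
        ring
    obtain ⟨h, -, hh⟩ := struct (hs c) (hns c hc2) (hK c hc2) (hK0 c hc) (hmin c hc2 hc1)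
      (p + 1) (by lia) _ hker
    refine ⟨eval ![P 0, P 1] h, fun i => ?_⟩
    rw [hval, hvald, hvald]
    have := congrArg (eval ![P 0, P 1]) (congrFun hh i)
    simp only [Pi.sub_apply, Pi.smul_apply, smul_eq_mul, map_sub, map_mul, eval_th hc2 hP,
      eval_X] at this
    exact this) (by
    intro c hc P hP hcP
    obtain ⟨hc2, hc1, -⟩ := hδc c hc
    simp only [hval]
    refine min_eval_ne (hK c hc2) (hK0 c hc) (hmin c hc2 hc1) fun h => hP ?_
    have e0 : P 0 = 0 := by simpa using congrFun h 0
    have e1 : P 1 = 0 := by simpa using congrFun h 1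
    have e2 : P 2 = 0 := by
      rw [Fin.sum_univ_three, e0, e1] at hcP
      simpa [hc2] using hcP
    funext i; fin_cases i <;> simp [e0, e1, e2])
  obtain ⟨c, hc⟩ := poly_ne hδ0
  refine ⟨c, (hδc c hc).1, (hδc c hc).2.1, (xx u c).1.1, s, hK c (hδc c hc).1, hK0 c hc, hs0, ?_⟩
  intro P hP hcP
  have := hs1 c hc P hP hcP
  simpa only [hval] using this

end Fixed
end WLP


namespace WLP

section Fixed
variable {K : Type*} [Field K] [IsAlgClosed K] [CharZero K] {n : ℕ} {a : Fin (n + 2) → ℤ}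
  {b : Fin n → ℤ} {Φ : Matrix (Fin n) (Fin (n + 2)) (MvPolynomial (Fin 3) K)}

/-- homogeneous lift of the generator -/
lemma lift_gen (hΦ : ∀ j i, WH (Φ j i) (a i - b j)) {p : ℤ} {c : Fin 3 → K} (hc : c 2 ≠ 0)
    (hmin : ∀ D < p, ∀ f, Ker (Φ.map (th c)) a D f → f = 0)
    {f : Fin (n + 2) → MvPolynomial (Fin 2) K} {s : Fin (n + 2) → MvPolynomial (Fin 3) K}
    (hf : Ker (Φ.map (th c)) a p f) (hf0 : f ≠ 0) (hs : Φ.mulVec s = 0)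
    (h : ∀ P : Fin 3 → K, P ≠ 0 → ∑ k, c k * P k = 0 → (∃ i, eval P (s i) ≠ 0) ∧
      ∀ i j, eval P (s i) * eval ![P 0, P 1] (f j) = eval P (s j) * eval ![P 0, P 1] (f i)) :
    ∃ t : Fin (n + 2) → MvPolynomial (Fin 3) K, (∀ i, WH (t i) (p - a i)) ∧ Φ.mulVec t = 0 ∧
      ∀ i, th c (t i) = f i := by
  have hQ : ∀ Q : Fin 2 → K, Q ≠ 0 → (∃ i, eval Q (th c (s i)) ≠ 0) ∧
      ∀ i j, eval Q (th c (s i)) * eval Q (f j) = eval Q (th c (s j)) * eval Q (f i) := by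
    intro Q hQ
    set P : Fin 3 → K := ![Q 0, Q 1, -(c 0 * Q 0 + c 1 * Q 1) / c 2] with hP
    have hcP : ∑ k, c k * P k = 0 := by
      simp [hP, Fin.sum_univ_three]; field_simp; ring
    have hPQ : ![P 0, P 1] = Q := by
      funext i; fin_cases i <;> simp [hP]
    have := h P (fun h0 => hQ (by rw [← hPQ, h0]; funext i; fin_cases i <;> simp)) hcP
    simpa only [← eval_th hc hcP, hPQ] using this
  have hpar : ∀ i j, th c (s i) * f j = th c (s j) * f i := by
    intro i j
    rw [← sub_eq_zero]
    refine (mul_eq_zero.mp (?_ : X 0 * _ = (0 : MvPolynomial (Fin 2) K))).resolve_left (X_ne_zero _)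
    apply MvPolynomial.funext
    intro Q
    by_cases hQ0 : Q = 0
    · simp [hQ0]
    · simp only [map_mul, map_sub, (hQ Q hQ0).2 i j]; simp
  obtain ⟨g, s0, hfs, hprim⟩ := ufd_prim hf0
  obtain ⟨r, hr⟩ := hprim (fun i => th c (s i)) hpar
  obtain ⟨k, hk, rfl⟩ := const_of_no_zero (h := g) (fun Q hQ0 h0 => by
    obtain ⟨i, hi⟩ := min_eval_ne hf hf0 hmin hQ0
    apply hi
    rw [hfs]; simp [h0])
  obtain ⟨k', hk', rfl⟩ := const_of_no_zero (h := r) (fun Q hQ0 h0 => by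
    obtain ⟨i, hi⟩ := (hQ Q hQ0).1
    apply hi
    rw [congrFun hr i]; simp [h0])
  have hfi : ∀ i, th c (C (k / k') * s i) = f i := by
    intro i
    rw [map_mul, congrFun hr i, hfs]
    simp only [algHom_C, algebraMap_eq, Pi.smul_apply, smul_eq_mul]
    rw [← mul_assoc, ← C_mul, div_mul_cancel₀ _ hk']
  refine ⟨fun i => weightedHomogeneousComponent (fun _ : Fin 3 => (1 : ℤ)) (p - a i)
    (C (k / k') * s i), fun i => weightedHomogeneousComponent_isWeightedHomogeneous _ _, ?_, ?_⟩
  · funext j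
    have h0 : ∑ i, Φ j i * (C (k / k') * s i) = 0 := by
      have := congrArg (fun z => C (k / k') * z) (congrFun hs j)
      simp only [Matrix.mulVec, dotProduct, Finset.mul_sum, Pi.zero_apply, mul_zero] at this
      rw [← this]
      exact Finset.sum_congr rfl fun i _ => by ring
    have h1 := congrArg (weightedHomogeneousComponent (fun _ : Fin 3 => (1 : ℤ)) (p - b j)) h0
    rw [map_sum, map_zero] at h1
    rw [Matrix.mulVec, dotProduct, Pi.zero_apply, ← h1]
    refine Finset.sum_congr rfl fun i _ => ?_
    rw [← comp_mul (hΦ j i), show a i - b j + (p - a i) = p - b j by ring]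
  · intro i
    rw [comp_th, hfi, weightedHomogeneousComponent_eq_self (hf.1 i)]

lemma fixed_d (hΦ : ∀ j i, WH (Φ j i) (a i - b j))
    (hfin : ∃ D0 : ℤ, ∀ D ≥ D0, ∀ g : Fin n → MvPolynomial (Fin 3) K,
      (∀ j, WH (g j) (D - b j)) → ∃ u : Fin (n + 2) → MvPolynomial (Fin 3) K,
        (∀ i, WH (u i) (D - a i)) ∧ Φ.mulVec u = g) (d : ℤ) :
    ∃ c, Inj' Φ a b c d ∨ Surj' Φ a b c d := by
  by_contra hcon
  push Not at hcon
  have hs : ∀ c : Fin 3 → K, ∃ D0 : ℤ, ∀ D ≥ D0, Sur (Φ.map (th c)) a b D := sur_fin hfin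
  have hns : ∀ c : Fin 3 → K, c 2 ≠ 0 → ¬ Sur (Φ.map (th c)) a b d :=
    fun c hc h => (hcon c).2 (surj_of_Sur hΦ hc h)
  have hnd : ∀ c : Fin 3 → K, c 2 ≠ 0 → ∃ f, Ker (Φ.map (th c)) a d f ∧ f ≠ 0 := by
    intro c hc
    by_contra h
    push Not at h
    exact (hcon c).1 (inj_of_lift hc fun f hf =>
      ⟨0, fun i => WH.zero _, Matrix.mulVec_zero _, fun i => by rw [h f hf]; simp⟩)
  obtain ⟨p, ⟨hpd, c1, hc1, hp1⟩, hpmax⟩ := Int.exists_greatest_of_bdd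
    (P := fun p => p ≤ d ∧ ∃ c : Fin 3 → K, c 2 ≠ 0 ∧
      ∀ D < p, ∀ f, Ker (Φ.map (th c)) a D f → f = 0)
    ⟨d, fun z hz => hz.1⟩ (by
      obtain ⟨E, hE⟩ : ∃ E : ℤ, ∀ i, E ≤ a i := by
        obtain ⟨E, hE⟩ := (Set.finite_range a).bddBelow
        exact ⟨E, fun j => hE ⟨j, rfl⟩⟩
      refine ⟨min d E, min_le_left _ _, fun _ => 1, one_ne_zero, fun D hD f hf => ?_⟩
      funext i
      by_contra hne
      have := (hf.1 i).nonneg hne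
      have := hE i
      have := min_le_right d E
      lia)
  have := fd_Vs (K := K) a b (p - 1)
  obtain ⟨δ1, hδ1, hopen⟩ := inj_open (TT0 Φ a b (p - 1)) (TTk a b (p - 1)) (c1 := c1)
    ((inj_iff hΦ hc1).mpr (hp1 _ (by lia)))
  have hmin : ∀ c : Fin 3 → K, c 2 ≠ 0 → eval c δ1 ≠ 0 →
      ∀ D < p, ∀ f, Ker (Φ.map (th c)) a D f → f = 0 :=
    fun c hc hcδ => Ker_down ((inj_iff hΦ hc).mp (hopen c hcδ))
  have hne : ∀ c : Fin 3 → K, c 2 ≠ 0 → eval c δ1 ≠ 0 →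
      ∃ f, Ker (Φ.map (th c)) a p f ∧ f ≠ 0 := by
    intro c hc hcδ
    rcases hpd.lt_or_eq with hlt | rfl
    · by_contra h
      push Not at h
      have := hpmax (p + 1) ⟨by lia, c, hc, Ker_down (by simpa using h)⟩
      lia
    · exact hnd c hc
  obtain ⟨c, hc2, hcδ, f, s, hf, hf0, hs0, hP⟩ := global_syz hΦ hs hpd hns
    (fun h => hδ1 (by rw [h, map_zero])) hmin hne
  obtain ⟨t, ht, ht0, htf⟩ := lift_gen hΦ hc2 (hmin c hc2 hcδ) hf hf0 hs0 hP
  refine (hcon c).1 (inj_of_lift hc2 fun f' hf' => ?_)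
  obtain ⟨h, hh, rfl⟩ := struct (hs c) (hns c hc2) hf hf0 (hmin c hc2 hcδ) d (by lia) f' hf'
  refine ⟨io h • t, fun i => WH.cast ((WH_io hh).mul (ht i)) (by ring), ?_, fun i => ?_⟩
  · rw [Matrix.mulVec_smul, ht0, smul_zero]
  · simp [th_io, htf]

lemma map_inj (hΦ : ∀ j i, homog (Φ j i) (a i - b j)) (c : Fin 3 → K) (d : ℤ)
    (h : Inj' Φ a b c d) : Function.Injective (mulLmap n a b Φ (linform c) (homog_linform c) d) := by
  rw [injective_iff_map_eq_zero]
  intro x hx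
  obtain ⟨⟨g, hg⟩, rfl⟩ := Submodule.Quotient.mk_surjective _ x
  rw [mulLmap, Submodule.mapQ_apply, Submodule.Quotient.mk_eq_zero] at hx
  obtain ⟨u, hu, hug⟩ := hx
  obtain ⟨v, hv, hvg⟩ := h g (mem_degPiece.mp hg) u (mem_degPiece.mp hu) hug
  rw [Submodule.Quotient.mk_eq_zero]
  exact ⟨v, mem_degPiece.mpr hv, hvg⟩

lemma map_surj (hΦ : ∀ j i, homog (Φ j i) (a i - b j)) (c : Fin 3 → K) (d : ℤ)
    (h : Surj' Φ a b c d) :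
    Function.Surjective (mulLmap n a b Φ (linform c) (homog_linform c) d) := by
  intro x
  obtain ⟨⟨g, hg⟩, rfl⟩ := Submodule.Quotient.mk_surjective _ x
  obtain ⟨g', u, hg', hu, hgu⟩ := h g (mem_degPiece.mp hg)
  refine ⟨Submodule.Quotient.mk ⟨g', mem_degPiece.mpr hg'⟩, ?_⟩
  rw [mulLmap, Submodule.mapQ_apply, eq_comm, Submodule.Quotient.eq]
  refine ⟨u, mem_degPiece.mpr hu, ?_⟩
  change Φ.mulVec u = g - linform c • g'
  rw [hgu]; abel

lemma map_fam (d : ℤ) (c : Fin 3 → K) :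
    mulLmap n a b Φ (linform c) (homog_linform c) d =
      fam 0 (fun k => mulLmap n a b Φ (X k) (WH_X k) d) c := by
  apply LinearMap.ext
  intro x
  obtain ⟨g, rfl⟩ := Submodule.Quotient.mk_surjective _ x
  simp only [fam, zero_add, LinearMap.sum_apply, LinearMap.smul_apply]
  simp only [mulLmap, Submodule.mapQ_apply]
  simp only [← Submodule.Quotient.mk_smul, Fin.sum_univ_three, ← Submodule.Quotient.mk_add]
  congr 1
  ext1
  funext j
  simp [mulLres, mulL_apply, linform, Fin.sum_univ_three, smul_eq_C_mul]
  ring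

end Fixed
end WLP
open WLP

/-- If `M = coker φ` is a finite length graded module over `K[x,y,z]`
(`φ` a degree-zero graded map `⊕_{i=1}^{n+2} R(-a_i) → ⊕_{j=1}^n R(-b_j)`), then `M` has the
Weak Lefschetz Property: there is a linear form `L` such that multiplication by `L` from each
graded piece of `M` to the next is injective or surjective. -/
theorem statement0 {K : Type*} [Field K] [IsAlgClosed K] [CharZero K]
    (n : ℕ) (a : Fin (n + 2) → ℤ) (b : Fin n → ℤ)
    (Φ : Matrix (Fin n) (Fin (n + 2)) (MvPolynomial (Fin 3) K))
    (hΦ : ∀ j i, homog (Φ j i) (a i - b j))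
    (hfin : FiniteColength n a b Φ) :
    ∃ (L : MvPolynomial (Fin 3) K) (hL : homog L 1),
      ∀ d : ℤ, Function.Injective (mulLmap n a b Φ L hL d) ∨
        Function.Surjective (mulLmap n a b Φ L hL d) := by
  have hfin' : ∃ D0 : ℤ, ∀ D ≥ D0, ∀ g : Fin n → MvPolynomial (Fin 3) K,
      (∀ j, WH (g j) (D - b j)) → ∃ u : Fin (n + 2) → MvPolynomial (Fin 3) K,
        (∀ i, WH (u i) (D - a i)) ∧ Φ.mulVec u = g := by
    obtain ⟨D, hD⟩ := hfin
    refine ⟨D, fun d hd g hg => ?_⟩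
    obtain ⟨u, hu, hug⟩ := hD d hd (mem_degPiece.mpr hg)
    exact ⟨u, mem_degPiece.mp hu, hug⟩
  have hopen : ∀ d : ℤ, ∃ δ : MvPolynomial (Fin 3) K, δ ≠ 0 ∧ ∀ c, eval c δ ≠ 0 →
      (Function.Injective (mulLmap n a b Φ (linform c) (homog_linform c) d) ∨
        Function.Surjective (mulLmap n a b Φ (linform c) (homog_linform c) d)) := by
    intro d
    have := fd_degPiece (K := K) b (d - 1)
    have := fd_degPiece (K := K) b d
    obtain ⟨c1, h | h⟩ := fixed_d hΦ hfin' d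
    · have h1 := map_inj hΦ c1 d h
      rw [map_fam] at h1
      obtain ⟨δ, hδ, hδ'⟩ := inj_open _ _ h1
      exact ⟨δ, fun h => hδ (by rw [h, map_zero]), fun c hc =>
        Or.inl (by rw [map_fam]; exact hδ' c hc)⟩
    · have h1 := map_surj hΦ c1 d h
      rw [map_fam] at h1
      obtain ⟨δ, hδ, hδ'⟩ := surj_open _ _ h1
      exact ⟨δ, fun h => hδ (by rw [h, map_zero]), fun c hc =>
        Or.inr (by rw [map_fam]; exact hδ' c hc)⟩
  choose δ hδ0 hδ using hopen
  obtain ⟨D0, hD0⟩ := hfin'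
  obtain ⟨E, hE⟩ : ∃ E : ℤ, ∀ j, E ≤ b j := by
    obtain ⟨E, hE⟩ := (Set.finite_range b).bddBelow
    exact ⟨E, fun j => hE ⟨j, rfl⟩⟩
  obtain ⟨c, hc⟩ := poly_ne (Finset.prod_ne_zero_iff.mpr
    (fun d (_ : d ∈ Finset.Icc E D0) => hδ0 d))
  rw [map_prod, Finset.prod_ne_zero_iff] at hc
  refine ⟨linform c, homog_linform c, fun d => ?_⟩
  by_cases h1 : d < E
  · left
    apply map_inj hΦ
    intro g hg u hu hug
    refine ⟨0, fun i => WH.zero _, ?_⟩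
    rw [Matrix.mulVec_zero]
    funext j
    by_contra hne
    have := (hg j).nonneg (Ne.symm hne)
    have := hE j
    lia
  by_cases h2 : D0 < d
  · right
    apply map_surj hΦ
    intro g hg
    obtain ⟨u, hu, hug⟩ := hD0 d h2.le g hg
    exact ⟨0, u, fun j => WH.zero _, hu, by rw [hug]; simp⟩
  · exact hδ d c (hc d (Finset.mem_Icc.mpr ⟨by lia, by lia⟩))
end

section
/- Assume a−b is even and N_m = 0 (i.e. the associated normalized rank-2 bundle is stable with c_1 = 0). Then for a general linear form L ∈ R_1, the multiplication map ×L : M_{d−1} → M_d is injective for all d ≤ m−1 and surjective for all d ≥ m−1. -/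
open MvPolynomial

noncomputable section
namespace GM

/-- vectors of univariate polynomials with `deg (v i) ≤ e - a i`. -/
def PB (A : Type*) [CommRing A] (N : ℕ) (a : Fin N → ℤ) (e : ℤ) :
    Submodule A (Fin N → Polynomial A) where
  carrier := {v | ∀ i, ∀ l : ℕ, e - a i < l → (v i).coeff l = 0}
  add_mem' := by
    intro v w hv hw i l hl
    simp [hv i l hl, hw i l hl]
  zero_mem' := by intro i l _; simp
  smul_mem' := by
    intro r v hv i l hl
    simp [hv i l hl]

lemma mem_PB {A : Type*} [CommRing A] {N : ℕ} {a : Fin N → ℤ} {e : ℤ}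
    {v : Fin N → Polynomial A} :
    v ∈ PB A N a e ↔ ∀ i, ∀ l : ℕ, e - a i < l → (v i).coeff l = 0 := Iff.rfl

/-- coefficient index type -/
abbrev Ix (N : ℕ) (a : Fin N → ℤ) (e : ℤ) := Σ i : Fin N, Fin (e - a i + 1).toNat

def dec (A : Type*) [CommRing A] (N : ℕ) (a : Fin N → ℤ) (e : ℤ) :
    (Ix N a e → A) →ₗ[A] (Fin N → Polynomial A) where
  toFun x i := ∑ l : Fin (e - a i + 1).toNat, Polynomial.monomial l (x ⟨i, l⟩)
  map_add' x y := by
    ext1 i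
    simp [Finset.sum_add_distrib]
  map_smul' r x := by
    ext1 i
    simp [Finset.smul_sum, Polynomial.smul_monomial]

lemma dec_apply (A : Type*) [CommRing A] (N : ℕ) (a : Fin N → ℤ) (e : ℤ) (x : Ix N a e → A)
    (i : Fin N) :
    dec A N a e x i = ∑ l : Fin (e - a i + 1).toNat, Polynomial.monomial l (x ⟨i, l⟩) := rfl

lemma coeff_dec (A : Type*) [CommRing A] (N : ℕ) (a : Fin N → ℤ) (e : ℤ) (x : Ix N a e → A)
    (i : Fin N) (l : ℕ) :
    (dec A N a e x i).coeff l =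
      if h : l < (e - a i + 1).toNat then x ⟨i, ⟨l, h⟩⟩ else 0 := by
  rw [dec_apply, Polynomial.finsetSum_coeff]
  simp only [Polynomial.coeff_monomial]
  split_ifs with h
  · rw [Finset.sum_eq_single (⟨l, h⟩ : Fin (e - a i + 1).toNat)]
    · simp
    · intro b _ hb
      rw [if_neg]
      intro hbl
      exact hb (Fin.ext hbl)
    · simp
  · apply Finset.sum_eq_zero
    intro b _
    rw [if_neg]
    intro hbl
    exact h (hbl ▸ b.2)

lemma dec_inj (A : Type*) [CommRing A] (N : ℕ) (a : Fin N → ℤ) (e : ℤ) :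
    Function.Injective (dec A N a e) := by
  intro x y hxy
  ext ⟨i, l⟩
  have := congrArg (fun v => (v i).coeff l) hxy
  simp only [coeff_dec] at this
  rwa [dif_pos l.2, dif_pos l.2] at this

lemma range_dec (A : Type*) [CommRing A] (N : ℕ) (a : Fin N → ℤ) (e : ℤ) :
    LinearMap.range (dec A N a e) = PB A N a e := by
  ext v
  constructor
  · rintro ⟨x, rfl⟩ i l hl
    rw [coeff_dec, dif_neg]
    omega
  · intro hv
    refine ⟨fun p => (v p.1).coeff p.2, ?_⟩
    ext i l
    rw [coeff_dec]
    split_ifs with h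
    · rfl
    · exact (hv i l (by omega)).symm

instance (K : Type*) [Field K] (N : ℕ) (a : Fin N → ℤ) (e : ℤ) :
    FiniteDimensional K (PB K N a e) := by
  rw [← range_dec]; infer_instance

lemma finrank_PB (K : Type*) [Field K] (N : ℕ) (a : Fin N → ℤ) (e : ℤ) :
    Module.finrank K (PB K N a e) = ∑ i, (e - a i + 1).toNat := by
  rw [← range_dec, LinearMap.finrank_range_of_inj (dec_inj K N a e)]
  simp [Fintype.card_sigma]

section Line
variable {K : Type*} [Field K] {n : ℕ} {a : Fin (n + 2) → ℤ} {b : Fin n → ℤ}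
  {Ψ : Matrix (Fin n) (Fin (n + 2)) (Polynomial K)} {m : ℤ}

/-- `Ψ` as a `K`-linear map -/
def psi (Ψ : Matrix (Fin n) (Fin (n + 2)) (Polynomial K)) :
    (Fin (n + 2) → Polynomial K) →ₗ[K] (Fin n → Polynomial K) :=
  (Matrix.mulVecLin Ψ).restrictScalars K

lemma psi_apply (v) : psi Ψ v = Ψ.mulVec v := rfl

def DegB (a : Fin (n + 2) → ℤ) (b : Fin n → ℤ)
    (Ψ : Matrix (Fin n) (Fin (n + 2)) (Polynomial K)) : Prop :=
  ∀ j i, ∀ l : ℕ, a i - b j < l → (Ψ j i).coeff l = 0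

def FC (a : Fin (n + 2) → ℤ) (b : Fin n → ℤ)
    (Ψ : Matrix (Fin n) (Fin (n + 2)) (Polynomial K)) : Prop :=
  ∃ D : ℤ, ∀ d : ℤ, D ≤ d → ∀ g ∈ PB K n b d, ∃ f ∈ PB K (n + 2) a d, psi Ψ f = g

def KK (a : Fin (n + 2) → ℤ) (Ψ : Matrix (Fin n) (Fin (n + 2)) (Polynomial K)) (e : ℤ) :
    Submodule K (Fin (n + 2) → Polynomial K) := PB K (n + 2) a e ⊓ LinearMap.ker (psi Ψ)

lemma coeff_mul_zero {A : Type*} [CommRing A] {p q : Polynomial A} {r s : ℤ}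
    (hp : ∀ l : ℕ, r < l → p.coeff l = 0)
    (hq : ∀ l : ℕ, s < l → q.coeff l = 0) (l : ℕ) (hl : r + s < l) : (p * q).coeff l = 0 := by
  rw [Polynomial.coeff_mul]
  apply Finset.sum_eq_zero
  rintro ⟨x, y⟩ hxy
  have hxy := Finset.HasAntidiagonal.mem_antidiagonal.1 hxy
  simp only at hxy ⊢
  by_cases hx : r < x
  · rw [hp x hx, zero_mul]
  · rw [hq y (by omega), mul_zero]

lemma psi_mem (hΨ : DegB a b Ψ) {d : ℤ} {f : Fin (n + 2) → Polynomial K}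
    (hf : f ∈ PB K (n + 2) a d) : psi Ψ f ∈ PB K n b d := by
  intro j l hl
  rw [psi_apply, Matrix.mulVec, dotProduct, Polynomial.finsetSum_coeff]
  apply Finset.sum_eq_zero
  intro i _
  exact coeff_mul_zero (hΨ j i) (hf i) l (by omega)

instance (e : ℤ) : FiniteDimensional K (KK a Ψ e) :=
  Submodule.finiteDimensional_of_le (inf_le_left : KK a Ψ e ≤ PB K (n + 2) a e)

lemma sum_toNat (N : ℕ) (a : Fin N → ℤ) : ∃ D : ℤ, ∀ e, D ≤ e →
    ((∑ i, (e - a i + 1).toNat : ℕ) : ℤ) = N * (e + 1) - ∑ i, a i := by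
  refine ⟨∑ i, |a i|, fun e he => ?_⟩
  have h1 : ∀ i, a i ≤ e := fun i =>
    (le_abs_self _).trans ((Finset.single_le_sum (f := fun i => |a i|)
      (fun i _ => abs_nonneg _) (Finset.mem_univ i)).trans he)
  push_cast
  rw [Finset.sum_congr rfl (fun i _ => (by have := h1 i; omega :
    ((e - a i + 1).toNat : ℤ) = (e + 1) - a i))]
  simp [Finset.sum_sub_distrib]

end Line
end GM
end

noncomputable section
namespace GM
section Line
variable {K : Type*} [Field K] {n : ℕ} {a : Fin (n + 2) → ℤ} {b : Fin n → ℤ}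
  {Ψ : Matrix (Fin n) (Fin (n + 2)) (Polynomial K)} {m : ℤ}

lemma finrank_split {V W : Type*} [AddCommGroup V] [Module K V] [AddCommGroup W] [Module K W]
    (P : Submodule K V) [FiniteDimensional K P] (f : V →ₗ[K] W) :
    Module.finrank K (P.map f) + Module.finrank K (P ⊓ LinearMap.ker f : Submodule K V) =
      Module.finrank K P := by
  rw [← LinearMap.finrank_range_add_finrank_ker (f.domRestrict P), LinearMap.range_domRestrict]
  congr 1
  rw [← Submodule.finrank_map_subtype_eq P (LinearMap.ker (f.domRestrict P)),
    LinearMap.ker_domRestrict, Submodule.map_comap_subtype]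

lemma rank_KK (hΨ : DegB a b Ψ) (hfc : FC a b Ψ) (hm : (∑ i, a i) - (∑ j, b j) = 2 * m) :
    ∃ D : ℤ, ∀ e, D ≤ e → (Module.finrank K (KK a Ψ e) : ℤ) = 2 * (e + 1 - m) := by
  obtain ⟨D1, h1⟩ := hfc
  obtain ⟨D2, h2⟩ := sum_toNat (n + 2) a
  obtain ⟨D3, h3⟩ := sum_toNat n b
  refine ⟨max D1 (max D2 D3), fun e he => ?_⟩
  have e1 := h1 e (le_trans (le_max_left _ _) he)
  have e2 := h2 e (le_trans ((le_max_left _ _).trans (le_max_right _ _)) he)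
  have e3 := h3 e (le_trans ((le_max_right _ _).trans (le_max_right _ _)) he)
  have key := finrank_split (PB K (n + 2) a e) (psi Ψ)
  have hmap : (PB K (n + 2) a e).map (psi Ψ) = PB K n b e := by
    apply le_antisymm
    · rintro _ ⟨f, hf, rfl⟩
      exact psi_mem hΨ hf
    · intro g hg
      obtain ⟨f, hf, rfl⟩ := e1 g hg
      exact ⟨f, hf, rfl⟩
  rw [hmap, finrank_PB, finrank_PB] at key
  rw [KK]
  have key' : ((∑ i, (e - b i + 1).toNat : ℕ) : ℤ) +
    (Module.finrank K (PB K (n + 2) a e ⊓ LinearMap.ker (psi Ψ) :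
      Submodule K (Fin (n + 2) → Polynomial K)) : ℤ) =
    ((∑ i, (e - a i + 1).toNat : ℕ) : ℤ) := by exact_mod_cast key
  rw [e2, e3] at key'
  push_cast at key'
  linarith

lemma dep (hΨ : DegB a b Ψ) (hfc : FC a b Ψ) (hm : (∑ i, a i) - (∑ j, b j) = 2 * m)
    {p q : ℤ} {u v : Fin (n + 2) → Polynomial K} (hu : u ∈ KK a Ψ p) (hv : v ∈ KK a Ψ q)
    (hpq : p + q < 2 * m) (i j : Fin (n + 2)) : u i * v j = u j * v i := by
  by_contra hne
  have hne' : u i * v j - u j * v i ≠ 0 := sub_ne_zero.2 hne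
  obtain ⟨D1, h1⟩ := rank_KK hΨ hfc hm
  obtain ⟨D2, h2⟩ := sum_toNat 2 ![p, q]
  set e := max D1 D2
  have e1 := h1 e (le_max_left _ _)
  have e2 := h2 e (le_max_right _ _)
  let T : (Fin 2 → Polynomial K) →ₗ[K] (Fin (n + 2) → Polynomial K) :=
    { toFun := fun f => f 0 • u + f 1 • v
      map_add' := by intro f g; simp only [Pi.add_apply, add_smul]; abel
      map_smul' := by intro r f; simp [smul_add] }
  have hT : ∀ f, T f = f 0 • u + f 1 • v := fun _ => rfl
  have hle : (PB K 2 ![p, q] e).map T ≤ KK a Ψ e := by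
    rintro _ ⟨f, hf, rfl⟩
    refine ⟨?_, ?_⟩
    · intro k l hl
      rw [hT]
      simp only [Pi.add_apply, Pi.smul_apply, smul_eq_mul, Polynomial.coeff_add]
      rw [coeff_mul_zero (hf 0) (hu.1 k) l (by simp; omega),
        coeff_mul_zero (hf 1) (hv.1 k) l (by simp; omega), add_zero]
    · have hu2 : Ψ.mulVec u = 0 := hu.2
      have hv2 : Ψ.mulVec v = 0 := hv.2
      show Ψ.mulVec (f 0 • u + f 1 • v) = 0
      rw [Matrix.mulVec_add, Matrix.mulVec_smul, Matrix.mulVec_smul, hu2, hv2]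
      simp
  have hker : LinearMap.ker T = ⊥ := by
    rw [LinearMap.ker_eq_bot']
    intro f hf
    have hi : f 0 * u i + f 1 * v i = 0 := congrFun hf i
    have hj : f 0 * u j + f 1 * v j = 0 := congrFun hf j
    have h0 : f 0 * (u i * v j - u j * v i) = 0 := by linear_combination v j * hi - v i * hj
    have h1 : f 1 * (u i * v j - u j * v i) = 0 := by linear_combination u i * hj - u j * hi
    ext1 k
    fin_cases k
    · exact (mul_eq_zero.1 h0).resolve_right hne'
    · exact (mul_eq_zero.1 h1).resolve_right hne'
  have hs := finrank_split (PB K 2 ![p, q] e) T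
  rw [hker, inf_bot_eq, finrank_bot, finrank_PB] at hs
  have := Submodule.finrank_mono hle
  have h3 : ((∑ i, (e - ![p, q] i + 1).toNat : ℕ) : ℤ) ≤ Module.finrank K (KK a Ψ e) := by
    rw [← hs]; exact_mod_cast this
  rw [e1, e2] at h3
  simp at h3
  omega

def lc (a : Fin (n + 2) → ℤ) (e : ℤ) : (Fin (n + 2) → Polynomial K) →ₗ[K] (Fin (n + 2) → K) where
  toFun v i := if 0 ≤ e - a i then (v i).coeff (e - a i).toNat else 0
  map_add' v w := by
    ext i; simp only [Pi.add_apply]; split_ifs <;> simp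
  map_smul' r v := by
    ext i; simp only [Pi.smul_apply]; split_ifs <;> simp

lemma lc_apply (e : ℤ) (v : Fin (n + 2) → Polynomial K) (i) :
  lc a e v i = if 0 ≤ e - a i then (v i).coeff (e - a i).toNat else 0 := rfl

lemma KK_mono {e e' : ℤ} (h : e ≤ e') : KK a Ψ e ≤ KK a Ψ e' := fun v hv =>
  ⟨fun i l hl => hv.1 i l (by omega), hv.2⟩

lemma X_smul_mem_KK {e : ℤ} {u : Fin (n + 2) → Polynomial K} (hu : u ∈ KK a Ψ e) :
    (Polynomial.X : Polynomial K) • u ∈ KK a Ψ (e + 1) := by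
  refine ⟨fun i l hl => ?_, ?_⟩
  · rw [Pi.smul_apply, smul_eq_mul]
    rcases l with _ | l
    · simp
    · rw [Polynomial.coeff_X_mul]
      exact hu.1 i l (by push_cast at hl; omega)
  · have hu2 : Ψ.mulVec u = 0 := hu.2
    show Ψ.mulVec _ = 0
    rw [Matrix.mulVec_smul, hu2, smul_zero]

lemma lc_X_smul {e : ℤ} (u : Fin (n + 2) → Polynomial K) :
    lc a (e + 1) ((Polynomial.X : Polynomial K) • u) = lc a e u := by
  ext i
  rw [lc_apply, lc_apply, Pi.smul_apply, smul_eq_mul]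
  by_cases h : 0 ≤ e - a i
  · rw [if_pos h, if_pos (by omega), show (e + 1 - a i).toNat = (e - a i).toNat + 1 by omega,
      Polynomial.coeff_X_mul]
  · rw [if_neg h]
    split_ifs with h2
    · rw [show (e + 1 - a i).toNat = 0 by omega]; simp
    · rfl

lemma KK_inf_ker (e : ℤ) : KK a Ψ (e + 1) ⊓ LinearMap.ker (lc a (e + 1)) = KK a Ψ e := by
  apply le_antisymm
  · rintro v ⟨hv, hl⟩
    refine ⟨fun i l h => ?_, hv.2⟩
    by_cases h' : e + 1 - a i < l
    · exact hv.1 i l h'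
    · have := congrFun (LinearMap.mem_ker.1 hl) i
      rw [lc_apply, if_pos (by omega), show (e + 1 - a i).toNat = l by omega] at this
      exact this
  · intro v hv
    refine ⟨KK_mono (by omega) hv, ?_⟩
    rw [SetLike.mem_coe, LinearMap.mem_ker]
    ext i
    rw [lc_apply]
    split_ifs with h
    · exact hv.1 i _ (by omega)
    · rfl

lemma W_mono (e : ℤ) : (KK a Ψ e).map (lc a e) ≤ (KK a Ψ (e + 1)).map (lc a (e + 1)) := by
  rintro _ ⟨u, hu, rfl⟩
  exact ⟨_, X_smul_mem_KK hu, lc_X_smul u⟩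

lemma W_mono' (e : ℤ) (k : ℕ) :
    (KK a Ψ e).map (lc a e) ≤ (KK a Ψ (e + k)).map (lc a (e + k)) := by
  induction k with
  | zero => simp
  | succ k ih =>
    refine ih.trans ?_
    have := W_mono (a := a) (Ψ := Ψ) (e + k)
    rw [show e + ((k + 1 : ℕ) : ℤ) = e + k + 1 by push_cast; ring]
    exact this

lemma W_rank (e : ℤ) : Module.finrank K ((KK a Ψ (e + 1)).map (lc a (e + 1))) +
    Module.finrank K (KK a Ψ e) = Module.finrank K (KK a Ψ (e + 1)) := by
  rw [← finrank_split (KK a Ψ (e + 1)) (lc a (e + 1)), KK_inf_ker]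

lemma rank_exact (hΨ : DegB a b Ψ) (hfc : FC a b Ψ) (hm : (∑ i, a i) - (∑ j, b j) = 2 * m)
    (h0 : KK a Ψ (m - 1) = ⊥) (e : ℤ) (he : m - 1 ≤ e) :
    (Module.finrank K (KK a Ψ e) : ℤ) = 2 * (e + 1 - m) := by
  obtain ⟨D, hD⟩ := rank_KK hΨ hfc hm
  have w2 : ∀ e, Module.finrank K ((KK a Ψ e).map (lc a e)) ≤ 2 := by
    intro e
    have h1 := Submodule.finrank_mono (W_mono' (a := a) (Ψ := Ψ) e (D + 1 - e).toNat)
    set E := e + ((D + 1 - e).toNat : ℤ) with hE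
    have h2 := W_rank (a := a) (Ψ := Ψ) (E - 1)
    rw [sub_add_cancel] at h2
    have h3 := hD E (by omega)
    have h4 := hD (E - 1) (by omega)
    omega
  have step : ∀ e, Module.finrank K (KK a Ψ (e + 1)) ≤ 2 + Module.finrank K (KK a Ψ e) := by
    intro e
    rw [← W_rank]
    exact Nat.add_le_add_right (w2 _) _
  apply le_antisymm
  · obtain ⟨k, rfl⟩ : ∃ k : ℕ, e = m - 1 + k := ⟨(e - (m - 1)).toNat, by omega⟩
    clear he
    induction k with
    | zero => simp [h0]
    | succ k ih =>
      have := step (m - 1 + k)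
      rw [show m - 1 + ((k + 1 : ℕ) : ℤ) = m - 1 + k + 1 by push_cast; ring]
      omega
  · have down : ∀ k : ℕ, ∀ e, D ≤ e + k →
        2 * (e + 1 - m) ≤ (Module.finrank K (KK a Ψ e) : ℤ) := by
      intro k
      induction k with
      | zero => intro e h; exact (hD e (by simpa using h)).ge
      | succ k ih =>
        intro e h
        have h1 := ih (e + 1) (by push_cast at h; omega)
        have h2 := step e
        omega
    exact down (D - e).toNat e (by omega)

lemma gen (hΨ : DegB a b Ψ) (hfc : FC a b Ψ) (hm : (∑ i, a i) - (∑ j, b j) = 2 * m)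
    (h0 : KK a Ψ (m - 1) = ⊥) (e : ℤ) (he : m ≤ e) {v : Fin (n + 2) → Polynomial K}
    (hv : v ∈ KK a Ψ (e + 1)) : ∃ k' ∈ KK a Ψ e, ∃ k'' ∈ KK a Ψ e,
      v = (Polynomial.X : Polynomial K) • k' + k'' := by
  have r := rank_exact hΨ hfc hm h0
  have r1 := r (e + 1) (by omega)
  have r2 := r e (by omega)
  have r3 := r (e - 1) (by omega)
  have w1 := W_rank (a := a) (Ψ := Ψ) e
  have w2 := W_rank (a := a) (Ψ := Ψ) (e - 1)
  rw [sub_add_cancel] at w2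
  have heq := Submodule.eq_of_le_of_finrank_eq (W_mono (a := a) (Ψ := Ψ) e) (by omega)
  have : lc a (e + 1) v ∈ (KK a Ψ e).map (lc a e) := by
    rw [heq]; exact ⟨v, hv, rfl⟩
  obtain ⟨k', hk', hk⟩ := this
  refine ⟨k', hk', v - (Polynomial.X : Polynomial K) • k', ?_, by abel⟩
  rw [← KK_inf_ker]
  refine ⟨Submodule.sub_mem _ hv (X_smul_mem_KK hk'), ?_⟩
  rw [SetLike.mem_coe, LinearMap.mem_ker, map_sub, lc_X_smul k', hk, sub_self]

lemma PB_mono {N : ℕ} {a : Fin N → ℤ} {e e' : ℤ} (h : e ≤ e') : PB K N a e ≤ PB K N a e' :=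
  fun _ hv i l hl => hv i l (by omega)

lemma X_smul_mem_PB {N : ℕ} {a : Fin N → ℤ} {e : ℤ} {u : Fin N → Polynomial K} :
    (Polynomial.X : Polynomial K) • u ∈ PB K N a (e + 1) ↔ u ∈ PB K N a e := by
  constructor
  · intro h i l hl
    have := h i (l + 1) (by push_cast; omega)
    rwa [Pi.smul_apply, smul_eq_mul, Polynomial.coeff_X_mul] at this
  · intro hu i l hl
    rw [Pi.smul_apply, smul_eq_mul]
    rcases l with _ | l
    · simp
    · rw [Polynomial.coeff_X_mul]
      exact hu i l (by push_cast at hl; omega)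

lemma surj (hΨ : DegB a b Ψ) (hfc : FC a b Ψ) (hm : (∑ i, a i) - (∑ j, b j) = 2 * m)
    (h0 : KK a Ψ (m - 1) = ⊥) (d : ℤ) (hd : m - 1 ≤ d) :
    ∀ g ∈ PB K n b d, ∃ f ∈ PB K (n + 2) a d, psi Ψ f = g := by
  obtain ⟨D, hD⟩ := id hfc
  have key : ∀ k : ℕ, ∀ d, m - 1 ≤ d → D ≤ d + k →
      ∀ g ∈ PB K n b d, ∃ f ∈ PB K (n + 2) a d, psi Ψ f = g := by
    intro k
    induction k with
    | zero => intro d _ h; exact hD d (by simpa using h)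
    | succ k ih =>
      intro d hd h g hg
      have ih' := ih (d + 1) (by omega) (by push_cast at h; omega)
      obtain ⟨u, hu, hug⟩ := ih' g (PB_mono (by omega) hg)
      obtain ⟨v, hv, hvg⟩ := ih' _ (X_smul_mem_PB.2 hg)
      have hk : (Polynomial.X : Polynomial K) • u - v ∈ KK a Ψ (d + 1 + 1) := by
        refine ⟨Submodule.sub_mem _ (X_smul_mem_PB.2 hu) (PB_mono (by omega) hv), ?_⟩
        rw [SetLike.mem_coe, LinearMap.mem_ker, map_sub, hvg, ← hug]
        simp [psi_apply, Matrix.mulVec_smul]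
      obtain ⟨k', hk', k'', hk'', heq⟩ := gen hΨ hfc hm h0 (d + 1) (by omega) hk
      refine ⟨u - k', ?_, ?_⟩
      · rw [← X_smul_mem_PB]
        have : (Polynomial.X : Polynomial K) • (u - k') = v + k'' := by
          rw [smul_sub]
          have := sub_eq_iff_eq_add.1 heq
          rw [this]; abel
        rw [this]
        exact Submodule.add_mem _ hv hk''.1
      · have : psi Ψ k' = 0 := hk'.2
        rw [map_sub, hug, this, sub_zero]
  exact key (D - d).toNat d hd (by omega)

end Line
end GM
end

noncomputable section
namespace GM
section Mat
variable {n : ℕ} {a : Fin (n + 2) → ℤ}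

def Tm {A : Type*} [CommRing A] (a : Fin (n + 2) → ℤ) (e : ℤ) (N : ℕ)
    (Ψ : Matrix (Fin n) (Fin (n + 2)) (Polynomial A)) :
    Matrix (Fin n × Fin N) (Ix (n + 2) a e) A :=
  Matrix.of fun j p => (Ψ j.1 p.1 * Polynomial.X ^ (p.2 : ℕ)).coeff j.2

def HN {A : Type*} [CommRing A] (a : Fin (n + 2) → ℤ) (e : ℤ) (N : ℕ)
    (Ψ : Matrix (Fin n) (Fin (n + 2)) (Polynomial A)) : Prop :=
  ∀ j, ∀ p : Ix (n + 2) a e, ∀ l : ℕ, N ≤ l →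
    (Ψ j p.1 * Polynomial.X ^ (p.2 : ℕ)).coeff l = 0

lemma exists_HN {A : Type*} [CommRing A] (a : Fin (n + 2) → ℤ) (e : ℤ)
    (Ψ : Matrix (Fin n) (Fin (n + 2)) (Polynomial A)) : ∃ N, HN a e N Ψ := by
  refine ⟨(∑ q : Fin n × Ix (n + 2) a e,
    (Ψ q.1 q.2.1 * Polynomial.X ^ (q.2.2 : ℕ)).natDegree) + 1, fun j p l hl => ?_⟩
  apply Polynomial.coeff_eq_zero_of_natDegree_lt
  have := Finset.single_le_sum (f := fun q : Fin n × Ix (n + 2) a e =>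
    (Ψ q.1 q.2.1 * Polynomial.X ^ (q.2.2 : ℕ)).natDegree) (fun _ _ => Nat.zero_le _)
    (Finset.mem_univ (j, p))
  simp only at this
  omega

lemma HN_map {A B : Type*} [CommRing A] [CommRing B] (f : A →+* B) {e : ℤ} {N : ℕ}
    {Ψ : Matrix (Fin n) (Fin (n + 2)) (Polynomial A)} (h : HN a e N Ψ) :
    HN a e N (Ψ.map (Polynomial.map f)) := by
  intro j p l hl
  have := congrArg f (h j p l hl)
  rw [map_zero, ← Polynomial.coeff_map] at this
  simpa using this

lemma Tm_map {A B : Type*} [CommRing A] [CommRing B] (f : A →+* B) (e : ℤ) (N : ℕ)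
    (Ψ : Matrix (Fin n) (Fin (n + 2)) (Polynomial A)) :
    Tm a e N (Ψ.map (Polynomial.map f)) = (Tm a e N Ψ).map f := by
  ext j p
  simp only [Tm, Matrix.of_apply, Matrix.map_apply]
  rw [← Polynomial.coeff_map]
  simp

lemma mulVec_dec {A : Type*} [CommRing A] (e : ℤ)
    (Ψ : Matrix (Fin n) (Fin (n + 2)) (Polynomial A)) (x : Ix (n + 2) a e → A) (j : Fin n) (l : ℕ) :
    (Ψ.mulVec (dec A (n + 2) a e x) j).coeff l =
      ∑ p : Ix (n + 2) a e, (Ψ j p.1 * Polynomial.X ^ (p.2 : ℕ)).coeff l * x p := by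
  rw [Fintype.sum_sigma, Matrix.mulVec, dotProduct, Polynomial.finsetSum_coeff]
  refine Finset.sum_congr rfl fun i _ => ?_
  rw [dec_apply, Finset.mul_sum, Polynomial.finsetSum_coeff]
  refine Finset.sum_congr rfl fun k _ => ?_
  rw [← Polynomial.C_mul_X_pow_eq_monomial, mul_left_comm, Polynomial.coeff_C_mul, mul_comm]

lemma inj_iff {A : Type*} [CommRing A] {e : ℤ} {N : ℕ}
    {Ψ : Matrix (Fin n) (Fin (n + 2)) (Polynomial A)} (h : HN a e N Ψ) :
    Function.Injective (Tm a e N Ψ).mulVec ↔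
      ∀ u ∈ PB A (n + 2) a e, Ψ.mulVec u = 0 → u = 0 := by
  have key : ∀ x : Ix (n + 2) a e → A, (Tm a e N Ψ).mulVec x = 0 ↔
      Ψ.mulVec (dec A (n + 2) a e x) = 0 := by
    intro x
    constructor
    · intro hx
      ext j l
      rw [mulVec_dec]
      by_cases hl : l < N
      · exact congrFun hx (j, ⟨l, hl⟩)
      · simp [h j _ l (not_lt.1 hl)]
    · intro hx
      ext ⟨j, l⟩
      have := congrArg (fun v => (v j).coeff l) hx
      simp only [mulVec_dec] at this
      exact this
  have e1 : Function.Injective (Tm a e N Ψ).mulVec ↔ ∀ x, (Tm a e N Ψ).mulVec x = 0 → x = 0 :=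
    injective_iff_map_eq_zero (Matrix.mulVecLin (Tm a e N Ψ))
  rw [e1]
  constructor
  · intro H u hu hΨ
    rw [← range_dec] at hu
    obtain ⟨x, rfl⟩ := hu
    rw [H x ((key x).2 hΨ), map_zero]
  · intro H x hx
    have := H _ (by rw [← range_dec]; exact ⟨x, rfl⟩) ((key x).1 hx)
    exact dec_inj A (n + 2) a e (by rw [this, map_zero])

lemma left_inv {K : Type*} [Field K] {ι κ : Type*} [Fintype ι] [Fintype κ]
    [DecidableEq κ] [DecidableEq ι] (T : Matrix ι κ K) (h : Function.Injective T.mulVec) :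
    ∃ S : Matrix κ ι K, S * T = 1 := by
  obtain ⟨g, hg⟩ := LinearMap.exists_leftInverse_of_injective (Matrix.toLin' T)
    (LinearMap.ker_eq_bot.2 h)
  refine ⟨LinearMap.toMatrix' g, ?_⟩
  have := congrArg LinearMap.toMatrix' hg
  rwa [LinearMap.toMatrix'_comp, LinearMap.toMatrix'_toLin', LinearMap.toMatrix'_id] at this

/-- openness of injectivity -/
lemma open_inj {K : Type*} [Field K] {ι κ σ : Type*} [Fintype ι] [Fintype κ]
    [DecidableEq κ] [DecidableEq ι] (T : Matrix ι κ (MvPolynomial σ K)) (γ : σ → K)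
    (h : Function.Injective (T.map (eval γ)).mulVec) :
    ∃ P : MvPolynomial σ K, P ≠ 0 ∧
      ∀ c, eval c P ≠ 0 → Function.Injective (T.map (eval c)).mulVec := by
  obtain ⟨S, hS⟩ := left_inv _ h
  let S₁ : Matrix κ ι (MvPolynomial σ K) := S.map (fun r => C r)
  have hP : ∀ c, eval c (S₁ * T).det = (S * T.map (eval c)).det := by
    intro c
    rw [RingHom.map_det]
    congr 1
    rw [RingHom.mapMatrix_apply, Matrix.map_mul]
    congr 1
    ext i j
    simp [S₁]
  refine ⟨(S₁ * T).det, ?_, fun c hc => ?_⟩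
  · intro h0
    have := hP γ
    rw [h0, hS] at this
    simp at this
  · rw [hP] at hc
    have hu : Function.Injective (S * T.map (eval c)).mulVec := by
      rw [Matrix.mulVec_injective_iff_isUnit, Matrix.isUnit_iff_isUnit_det]
      exact isUnit_iff_ne_zero.2 hc
    intro x y hxy
    apply hu
    rw [← Matrix.mulVec_mulVec, ← Matrix.mulVec_mulVec, hxy]

lemma exists_spec {K : Type*} [Field K] [Infinite K] {ι κ σ : Type*} [Fintype ι] [Fintype κ]
    [DecidableEq κ] [DecidableEq ι] (T : Matrix ι κ (MvPolynomial σ K))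
    (h : Function.Injective T.mulVec) :
    ∃ γ : σ → K, Function.Injective (T.map (eval γ)).mulVec := by
  let A := MvPolynomial σ K
  let Q := FractionRing A
  have hQ : Function.Injective (T.map (algebraMap A Q)).mulVec := by
    refine (injective_iff_map_eq_zero (Matrix.mulVecLin (T.map (algebraMap A Q)))).2 fun x hx => ?_
    obtain ⟨s, hs⟩ := IsLocalization.exist_integer_multiples_of_finite (nonZeroDivisors A) x
    choose y hy using hs
    have hy0 : T.mulVec y = 0 := by
      ext1 i
      apply IsFractionRing.injective A Q
      have h1 := congrFun hx i
      simp only [Matrix.mulVecLin_apply, Matrix.mulVec, dotProduct, Matrix.map_apply,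
        Pi.zero_apply] at h1
      simp only [Matrix.mulVec, dotProduct, Pi.zero_apply, map_zero, map_sum, map_mul, hy]
      have : ∀ k, (algebraMap A Q) (T i k) * ((s : A) • x k) =
          (s : A) • ((algebraMap A Q) (T i k) * x k) := fun k => by
        rw [mul_smul_comm]
      rw [Finset.sum_congr rfl fun k _ => this k, ← Finset.smul_sum, h1, smul_zero]
    have hy1 : y = 0 := h (by rw [hy0, Matrix.mulVec_zero])
    ext1 k
    have h2 := hy k
    rw [hy1, Pi.zero_apply, map_zero, Algebra.smul_def] at h2
    refine (mul_eq_zero.1 h2.symm).resolve_left ?_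
    intro h3
    exact nonZeroDivisors.ne_zero s.2 (IsFractionRing.injective A Q (by rw [h3, map_zero]))
  obtain ⟨S, hS⟩ := left_inv _ hQ
  obtain ⟨s, hs⟩ := IsLocalization.exist_integer_multiples_of_finite (nonZeroDivisors A)
    (fun p : κ × ι => S p.1 p.2)
  choose y hy using hs
  let S' : Matrix κ ι A := Matrix.of fun k i => y (k, i)
  have hS' : S' * T = (s : A) • (1 : Matrix κ κ A) := by
    ext1 k l
    apply IsFractionRing.injective A Q
    have h1 := congrFun (congrFun hS k) l
    simp only [Matrix.mul_apply, Matrix.map_apply] at h1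
    simp only [Matrix.mul_apply, map_sum, map_mul, S', Matrix.of_apply, hy, Matrix.smul_apply,
      smul_eq_mul, smul_mul_assoc, ← Finset.smul_sum, h1]
    rw [Algebra.smul_def]
    congr 1
    simp [Matrix.one_apply, apply_ite]
  have hs0 : (s : A) ≠ 0 := nonZeroDivisors.ne_zero s.2
  obtain ⟨γ, hγ⟩ : ∃ γ, eval γ (s : A) ≠ 0 := by
    by_contra! H
    exact hs0 (MvPolynomial.funext fun x => by rw [H, map_zero])
  refine ⟨γ, ?_⟩
  have h1 := congrArg (fun M => M.map (eval γ)) hS'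
  simp only [Matrix.map_mul] at h1
  intro x y hxy
  have h2 : ((S'.map (eval γ)) * (T.map (eval γ))).mulVec x =
      ((S'.map (eval γ)) * (T.map (eval γ))).mulVec y := by
    rw [← Matrix.mulVec_mulVec, ← Matrix.mulVec_mulVec, hxy]
  have h3 : ((s : A) • (1 : Matrix κ κ A)).map (eval γ) = (eval γ (s : A)) • (1 : Matrix κ κ K) := by
    ext k l
    by_cases hkl : k = l <;> simp [hkl]
  rw [h1, h3, Matrix.smul_mulVec, Matrix.smul_mulVec, Matrix.one_mulVec, Matrix.one_mulVec] at h2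
  exact smul_right_injective _ hγ h2

end Mat
end GM
end

noncomputable section
namespace GM
section Bridge
variable {K : Type*} [Field K]

/-- restriction to the line with equation `c`. -/
def rho (K : Type*) [Field K] {A : Type*} [CommRing A] [Algebra K A] (c : Fin 3 → A) :
    MvPolynomial (Fin 3) K →ₐ[K] Polynomial A :=
  aeval ![Polynomial.C (c 2), Polynomial.C (c 2) * Polynomial.X,
    -(Polynomial.C (c 0) + Polynomial.C (c 1) * Polynomial.X)]

lemma homog_supp {p : MvPolynomial (Fin 3) K} {e : ℤ} (hp : homog p e) {s : Fin 3 →₀ ℕ}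
    (hs : s ∈ p.support) : (s 0 : ℤ) + s 1 + s 2 = e := by
  have := hp (mem_support_iff.1 hs)
  rw [Finsupp.weight_apply, Finsupp.sum_fintype _ _ (by simp)] at this
  simpa [Fin.sum_univ_three] using this

lemma rho_deg {A : Type*} [CommRing A] [Algebra K A] (c : Fin 3 → A)
    {p : MvPolynomial (Fin 3) K} {e : ℤ} (hp : homog p e) (l : ℕ) (hl : e < l) :
    (rho K c p).coeff l = 0 := by
  rw [rho, aeval_def, eval₂_eq', Polynomial.finsetSum_coeff]
  apply Finset.sum_eq_zero
  intro s hs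
  have hs' := homog_supp hp hs
  apply Polynomial.coeff_eq_zero_of_natDegree_lt
  rw [Fin.prod_univ_three]
  have h1 : (Polynomial.C (c 2) * Polynomial.X : Polynomial A).natDegree ≤ 1 := by
    compute_degree
  have h2 : (-(Polynomial.C (c 0) + Polynomial.C (c 1) * Polynomial.X) : Polynomial A).natDegree
      ≤ 1 := by
    rw [Polynomial.natDegree_neg]
    compute_degree
  have : ((algebraMap K (Polynomial A)) (coeff s p) * ((Polynomial.C (c 2)) ^ s 0 *
      (Polynomial.C (c 2) * Polynomial.X) ^ s 1 *
      (-(Polynomial.C (c 0) + Polynomial.C (c 1) * Polynomial.X)) ^ s 2)).natDegree ≤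
      0 + (0 + s 1 * 1 + s 2 * 1) := by
    refine Polynomial.natDegree_mul_le_of_le ?_ (Polynomial.natDegree_mul_le_of_le
      (Polynomial.natDegree_mul_le_of_le ?_ ?_) ?_)
    · rw [Polynomial.algebraMap_apply]; simp
    · rw [← Polynomial.C_pow, Polynomial.natDegree_C]
    · exact Polynomial.natDegree_pow_le_of_le _ h1
    · exact Polynomial.natDegree_pow_le_of_le _ h2
  simp only [Matrix.cons_val_zero, Matrix.cons_val_one, Matrix.cons_val]
  omega

lemma rho_map {A B : Type*} [CommRing A] [Algebra K A] [CommRing B] [Algebra K B]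
    (f : A →ₐ[K] B) (c : Fin 3 → A) (p : MvPolynomial (Fin 3) K) :
    Polynomial.map (f : A →+* B) (rho K c p) = rho K (fun i => f (c i)) p := by
  have : (Polynomial.mapAlgHom f).comp (rho K c) = rho K (fun i => f (c i)) := by
    apply MvPolynomial.algHom_ext
    intro i
    fin_cases i <;> simp [rho]
  have h := congrArg (fun g => g p) this
  simpa using h

lemma homog_mon {e : ℤ} (he : 0 ≤ e) (r : K) (i j k : ℕ) (h : i + j + k = e.toNat) :
    homog (C r * X 0 ^ i * X 1 ^ j * X 2 ^ k : MvPolynomial (Fin 3) K) e := by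
  have hX : ∀ q : Fin 3, homog (X q : MvPolynomial (Fin 3) K) 1 := fun q =>
    isWeightedHomogeneous_X K (fun _ : Fin 3 => (1 : ℤ)) q
  have h0 : homog (C r : MvPolynomial (Fin 3) K) 0 := isWeightedHomogeneous_C _ r
  have := ((h0.mul ((hX 0).pow i)).mul ((hX 1).pow j)).mul ((hX 2).pow k)
  have e1 : 0 + i • (1 : ℤ) + j • (1 : ℤ) + k • (1 : ℤ) = e := by simp; omega
  rw [e1] at this
  exact this

lemma homog_zero (e : ℤ) : homog (0 : MvPolynomial (Fin 3) K) e := isWeightedHomogeneous_zero _ _ _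

lemma homog_sum {ι : Type*} (s : Finset ι) (f : ι → MvPolynomial (Fin 3) K) (e : ℤ)
    (h : ∀ i ∈ s, homog (f i) e) : homog (∑ i ∈ s, f i) e :=
  IsWeightedHomogeneous.sum s f e h

lemma rho_lift {c : Fin 3 → K} (hc : c 2 ≠ 0) {q : Polynomial K} {e : ℤ}
    (hq : ∀ l : ℕ, e < l → q.coeff l = 0) : ∃ p, homog p e ∧ rho K c p = q := by
  by_cases he : 0 ≤ e
  · refine ⟨∑ l ∈ Finset.range (e.toNat + 1),
      C (q.coeff l / c 2 ^ e.toNat) * X 0 ^ (e.toNat - l) * X 1 ^ l * X 2 ^ 0, ?_, ?_⟩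
    · apply homog_sum
      intro l hl
      have := Finset.mem_range.1 hl
      exact homog_mon he _ _ _ _ (by omega)
    · have hd : q.natDegree < e.toNat + 1 := by
        by_cases h0 : q = 0
        · simp [h0]
        · by_contra hcon
          have := hq q.natDegree (by omega)
          exact h0 (Polynomial.leadingCoeff_eq_zero.1 this)
      rw [map_sum]
      conv_rhs => rw [Polynomial.as_sum_range' q _ hd]
      refine Finset.sum_congr rfl fun l hl => ?_
      have := Finset.mem_range.1 hl
      have e1 : c 2 ^ (e.toNat - l) * c 2 ^ l = c 2 ^ e.toNat := by
        rw [← pow_add]; congr 1; omega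
      have hr : rho K c (C (q.coeff l / c 2 ^ e.toNat) * X 0 ^ (e.toNat - l) * X 1 ^ l * X 2 ^ 0) =
          Polynomial.C (q.coeff l / c 2 ^ e.toNat * (c 2 ^ (e.toNat - l) * c 2 ^ l)) *
            Polynomial.X ^ l := by
        simp [rho, mul_pow]
        ring
      rw [hr, e1, div_mul_cancel₀ _ (pow_ne_zero _ hc), Polynomial.C_mul_X_pow_eq_monomial]
  · refine ⟨0, homog_zero _, ?_⟩
    rw [map_zero]
    ext l
    rw [hq l (by omega)]; simp

lemma eval_scale {p : MvPolynomial (Fin 3) K} {e : ℤ} (hp : homog p e) (t : K) (v : Fin 3 → K) :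
    eval (fun i => t * v i) p = t ^ e.toNat * eval v p := by
  rw [eval_eq', eval_eq', Finset.mul_sum]
  refine Finset.sum_congr rfl fun s hs => ?_
  have := homog_supp hp hs
  rw [show e.toNat = s 0 + s 1 + s 2 by omega]
  simp only [Fin.prod_univ_three]
  ring

lemma rho_eval (c : Fin 3 → K) (t : K) (p : MvPolynomial (Fin 3) K) :
    (rho K c p).eval t = eval ![c 2, c 2 * t, -(c 0 + c 1 * t)] p := by
  have : ((Polynomial.aeval t : Polynomial K →ₐ[K] K)).comp (rho K c) =
      aeval ![c 2, c 2 * t, -(c 0 + c 1 * t)] := by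
    apply MvPolynomial.algHom_ext
    intro i
    fin_cases i <;> simp [rho]
  have h := congrArg (fun g => g p) this
  rw [← MvPolynomial.coe_aeval_eq_eval, ← Polynomial.coe_aeval_eq_eval]
  exact h

lemma vanish [Infinite K] {σ : Type*} {p : MvPolynomial σ K} (i : σ)
    (h : ∀ v : σ → K, v i ≠ 0 → eval v p = 0) : p = 0 := by
  have : X i * p = 0 := by
    apply MvPolynomial.funext
    intro v
    by_cases hv : v i = 0
    · simp [hv]
    · simp [h v hv]
  exact (mul_eq_zero.1 this).resolve_left (X_ne_zero i)

lemma divL [Infinite K] {c : Fin 3 → K} (hc : c 2 ≠ 0) {p : MvPolynomial (Fin 3) K} {e : ℤ}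
    (hp : homog p e) (h0 : rho K c p = 0) : ∃ p', homog p' (e - 1) ∧ p = linform c * p' := by
  let v' : Fin 3 → MvPolynomial (Fin 3) K :=
    ![X 0, X 1, C (-c 0 / c 2) * X 0 + C (-c 1 / c 2) * X 1]
  let π : MvPolynomial (Fin 3) K →ₐ[K] MvPolynomial (Fin 3) K := aeval v'
  have hπ : π p = 0 := by
    apply vanish 0
    intro v hv
    have h1 : eval v (π p) = eval (fun i => (v 0 / c 2) *
        (![c 2, c 2 * (v 1 / v 0), -(c 0 + c 1 * (v 1 / v 0))] : Fin 3 → K) i) p := by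
      have : ((aeval v : MvPolynomial (Fin 3) K →ₐ[K] K)).comp π = aeval (fun i => (v 0 / c 2) *
        (![c 2, c 2 * (v 1 / v 0), -(c 0 + c 1 * (v 1 / v 0))] : Fin 3 → K) i) := by
        apply MvPolynomial.algHom_ext
        intro i
        fin_cases i
        · simp [π, v']; field_simp
        · simp [π, v']; field_simp
        · simp [π, v']; field_simp; ring
      have h := congrArg (fun g => g p) this
      rw [← MvPolynomial.coe_aeval_eq_eval, ← MvPolynomial.coe_aeval_eq_eval]
      exact h
    rw [h1, eval_scale hp, ← rho_eval, h0]
    simp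
  have hdvd : linform c ∣ p := by
    have hL : Ideal.Quotient.mkₐ K (Ideal.span {linform c}) (linform c) = 0 := by
      rw [Ideal.Quotient.mkₐ_eq_mk, Ideal.Quotient.eq_zero_iff_mem]
      exact Ideal.mem_span_singleton_self _
    have : (Ideal.Quotient.mkₐ K (Ideal.span {linform c})).comp π =
        (Ideal.Quotient.mkₐ K (Ideal.span {linform c})) := by
      apply MvPolynomial.algHom_ext
      intro i
      fin_cases i
      · simp [π, v']
      · simp [π, v']
      · have e1 : v' 2 = X 2 - C (1 / c 2) * linform c := by
          have hcc : (C (1 / c 2) * C (c 2) : MvPolynomial (Fin 3) K) = 1 := by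
            rw [← C_mul, one_div_mul_cancel hc, C_1]
          simp only [v', linform, Fin.sum_univ_three, Matrix.cons_val]
          rw [neg_div, neg_div, div_eq_mul_one_div, div_eq_mul_one_div (c 1)]
          simp only [C_neg, C_mul]
          linear_combination (X 2) * hcc
        show Ideal.Quotient.mkₐ K (Ideal.span {linform c}) (π (X 2)) = _
        simp only [π, aeval_X, e1, map_sub, map_mul, hL, mul_zero, sub_zero]
        rfl
    have h := congrArg (fun g => g p) this
    simp only [AlgHom.comp_apply, hπ, map_zero] at h
    rw [eq_comm, Ideal.Quotient.mkₐ_eq_mk, Ideal.Quotient.eq_zero_iff_mem,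
      Ideal.mem_span_singleton] at h
    exact h
  obtain ⟨q, rfl⟩ := hdvd
  let 𝒜 := weightedHomogeneousSubmodule K (fun _ : Fin 3 => (1 : ℤ))
  let _ : GradedAlgebra 𝒜 := weightedGradedAlgebra K (fun _ : Fin 3 => (1 : ℤ))
  refine ⟨(DirectSum.decompose 𝒜 q (e - 1) : MvPolynomial (Fin 3) K),
    (DirectSum.decompose 𝒜 q (e - 1)).2, ?_⟩
  have h1 := DirectSum.coe_decompose_mul_add_of_left_mem 𝒜 (i := 1) (j := e - 1)
    (a := linform c) (b := q) (homog_linform c)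
  rw [show 1 + (e - 1) = e by ring] at h1
  rw [← h1]
  exact (DirectSum.decompose_of_mem_same 𝒜 hp).symm

/-- dehomogenization -/
def theta (K : Type*) [Field K] : MvPolynomial (Fin 3) K →ₐ[K] MvPolynomial (Fin 2) K :=
  aeval ![1, X 0, X 1]

lemma theta_inj [Infinite K] {p : MvPolynomial (Fin 3) K} {e : ℤ}
    (hp : homog p e) (h0 : theta K p = 0) : p = 0 := by
  apply vanish 0
  intro v hv
  have h1 : eval ![v 1 / v 0, v 2 / v 0] (theta K p) = eval ![1, v 1 / v 0, v 2 / v 0] p := by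
    have : ((aeval ![v 1 / v 0, v 2 / v 0] : MvPolynomial (Fin 2) K →ₐ[K] K)).comp (theta K) =
        aeval ![1, v 1 / v 0, v 2 / v 0] := by
      apply MvPolynomial.algHom_ext
      intro i
      fin_cases i <;> simp [theta]
    have h := congrArg (fun g => g p) this
    rw [← MvPolynomial.coe_aeval_eq_eval, ← MvPolynomial.coe_aeval_eq_eval]
    exact h
  have h2 := eval_scale hp (v 0) ![1, v 1 / v 0, v 2 / v 0]
  rw [← h1, h0, map_zero, mul_zero] at h2
  rw [← h2]
  congr 2
  ext i
  fin_cases i <;> simp <;> field_simp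

lemma theta_lift {q : MvPolynomial (Fin 2) K} {e : ℤ}
    (hq : ∀ s ∈ q.support, (s 0 : ℤ) + s 1 ≤ e) : ∃ p, homog p e ∧ theta K p = q := by
  refine ⟨∑ s ∈ q.support, C (coeff s q) * X 0 ^ (e.toNat - s 0 - s 1) * X 1 ^ s 0 * X 2 ^ s 1,
    ?_, ?_⟩
  · apply homog_sum
    intro s hs
    have := hq s hs
    exact homog_mon (by omega) _ _ _ _ (by omega)
  · rw [map_sum]
    conv_rhs => rw [as_sum q]
    refine Finset.sum_congr rfl fun s hs => ?_
    rw [monomial_eq, Finsupp.prod_fintype _ _ (by simp)]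
    simp [theta, Fin.prod_univ_two, mul_assoc]
end Bridge
end GM
end

noncomputable section
namespace GM
section Generic
variable (K : Type*) [Field K]

abbrev k0 := MvPolynomial (Fin 2) K
abbrev BB := Polynomial (MvPolynomial (Fin 2) K)

def tau0 : k0 K →ₐ[K] BB K :=
  aeval ![Polynomial.C (X 1) - Polynomial.X * Polynomial.C (X 0), Polynomial.X]
def tau : BB K →ₐ[K] BB K :=
  Polynomial.eval₂AlgHom (tau0 K) (Polynomial.C (X 0)) (fun _ => Commute.all _ _)
def sigma0 : k0 K →ₐ[K] BB K :=
  aeval ![Polynomial.X, Polynomial.C (X 0) + Polynomial.C (X 1) * Polynomial.X]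
def sigma : BB K →ₐ[K] BB K :=
  Polynomial.eval₂AlgHom (sigma0 K) (Polynomial.C (X 1)) (fun _ => Commute.all _ _)

lemma tau_C (q : k0 K) : tau K (Polynomial.C q) = tau0 K q := Polynomial.eval₂_C _ _
lemma tau_X : tau K Polynomial.X = Polynomial.C (X 0) := Polynomial.eval₂_X _ _
lemma sigma_C (q : k0 K) : sigma K (Polynomial.C q) = sigma0 K q := Polynomial.eval₂_C _ _
lemma sigma_X : sigma K Polynomial.X = Polynomial.C (X 1) := Polynomial.eval₂_X _ _

lemma sigma_tau (p : BB K) : sigma K (tau K p) = p := by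
  have : (sigma K).comp (tau K) = AlgHom.id K _ := by
    apply Polynomial.algHom_ext'
    · apply MvPolynomial.algHom_ext
      intro i
      fin_cases i <;> simp [tau_C, tau0, sigma_C, sigma_X, sigma0]
    · simp [tau_X, sigma_C, sigma0]
  exact congrArg (fun g => g p) this

lemma tau_sigma (p : BB K) : tau K (sigma K p) = p := by
  have : (tau K).comp (sigma K) = AlgHom.id K _ := by
    apply Polynomial.algHom_ext'
    · apply MvPolynomial.algHom_ext
      intro i
      fin_cases i <;> simp [tau_C, tau0, sigma_C, tau_X, sigma0]
    · simp [tau_C, sigma_X, tau0]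
  exact congrArg (fun g => g p) this

def cgen : Fin 3 → k0 K := ![-X 0, -X 1, 1]

lemma tau_rho (p : MvPolynomial (Fin 3) K) :
    tau K (rho K (cgen K) p) = Polynomial.C (theta K p) := by
  have : (tau K).comp (rho K (cgen K)) = (Polynomial.CAlgHom).comp (theta K) := by
    apply MvPolynomial.algHom_ext
    intro i
    fin_cases i <;> simp [rho, cgen, tau_C, tau0, tau_X, theta]
  exact congrArg (fun g => g p) this

/-- derivation along the lines through a point. -/
def DD (p : BB K) : BB K := sigma K (Polynomial.derivative (tau K p))

lemma DD_add (p q : BB K) : DD K (p + q) = DD K p + DD K q := by simp [DD]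

lemma DD_mul (p q : BB K) : DD K (p * q) = DD K p * q + p * DD K q := by
  simp [DD, Polynomial.derivative_mul, sigma_tau]

lemma DD_C_deg (q : k0 K) : ∀ l : ℕ, (1 : ℤ) < l → (DD K (Polynomial.C q)).coeff l = 0 := by
  induction q using MvPolynomial.induction_on with
  | C r =>
    intro l _
    have : DD K (Polynomial.C (C r)) = 0 := by
      have h : tau K (Polynomial.C (C r)) = Polynomial.C (C r) := by
        rw [tau_C, tau0, ← MvPolynomial.algebraMap_eq, AlgHom.commutes]; rfl
      rw [DD, h]; simp
    rw [this]; simp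
  | add p q hp hq =>
    intro l hl
    rw [Polynomial.C_add, DD_add, Polynomial.coeff_add, hp l hl, hq l hl, add_zero]
  | mul_X p i hp =>
    intro l hl
    rw [Polynomial.C_mul, DD_mul, Polynomial.coeff_add, Polynomial.coeff_mul_C, hp l hl, zero_mul,
      zero_add, Polynomial.coeff_C_mul]
    have hX : (DD K (Polynomial.C (X i))).coeff l = 0 := by
      have h : DD K (Polynomial.C (X i)) = if i = 0 then -Polynomial.X else 1 := by
        fin_cases i
        · simp [DD, tau_C, tau0, sigma_C, sigma0]
        · simp [DD, tau_C, tau0]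
      rw [h]
      have h1 : l ≠ 0 := by omega
      have h2 : 1 ≠ l := by omega
      split_ifs <;> simp [Polynomial.coeff_X, Polynomial.coeff_one, h1, h2]
    rw [hX, mul_zero]

lemma DD_deg {p : BB K} {e : ℤ} (hp : ∀ l : ℕ, e < l → p.coeff l = 0) (l : ℕ) (hl : e + 1 < l) :
    (DD K p).coeff l = 0 := by
  have hX : ∀ k : ℕ, DD K (Polynomial.X ^ k) = 0 := by
    intro k
    rw [DD, map_pow, tau_X, ← Polynomial.C_pow, Polynomial.derivative_C, map_zero]
  have hz : DD K 0 = 0 := by simp [DD]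
  have hsum : DD K p = ∑ k ∈ p.support, DD K (Polynomial.C (p.coeff k) * Polynomial.X ^ k) := by
    conv_lhs => rw [p.as_sum_support_C_mul_X_pow]
    simp [DD]
  rw [hsum, Polynomial.finsetSum_coeff]
  apply Finset.sum_eq_zero
  intro k hk
  have hke : (k : ℤ) ≤ e := by
    by_contra h
    exact (Polynomial.mem_support_iff.1 hk) (hp k (by omega))
  rw [DD_mul, hX, mul_zero, add_zero]
  refine coeff_mul_zero (r := 1) (s := k) (DD_C_deg K _) ?_ l (by omega)
  intro l' hl'
  rw [Polynomial.coeff_X_pow, if_neg (by omega)]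

lemma kappa_coeff (q : k0 K) (s : Fin 2 →₀ ℕ) :
    (((aeval ![Polynomial.X, Polynomial.C Polynomial.X * Polynomial.X] :
      k0 K →ₐ[K] Polynomial (Polynomial K)) q).coeff (s 0 + s 1)).coeff (s 1) = coeff s q := by
  rw [aeval_def, eval₂_eq', Polynomial.finsetSum_coeff, Polynomial.finsetSum_coeff]
  have key : ∀ t : Fin 2 →₀ ℕ, (((algebraMap K (Polynomial (Polynomial K))) (coeff t q) *
      ∏ i, (![Polynomial.X, Polynomial.C Polynomial.X * Polynomial.X] :
        Fin 2 → Polynomial (Polynomial K)) i ^ t i).coeff (s 0 + s 1)).coeff (s 1) =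
      if s 0 + s 1 = t 0 + t 1 ∧ s 1 = t 1 then coeff t q else 0 := by
    intro t
    have e1 : ((algebraMap K (Polynomial (Polynomial K))) (coeff t q) *
      ∏ i, (![Polynomial.X, Polynomial.C Polynomial.X * Polynomial.X] :
        Fin 2 → Polynomial (Polynomial K)) i ^ t i) =
        Polynomial.C (Polynomial.C (coeff t q) * Polynomial.X ^ t 1) *
          Polynomial.X ^ (t 0 + t 1) := by
      rw [Fin.prod_univ_two]
      simp only [Matrix.cons_val_zero, Matrix.cons_val_one, Polynomial.C_mul, Polynomial.C_pow,
        mul_pow, pow_add]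
      rw [show (algebraMap K (Polynomial (Polynomial K))) (coeff t q) =
        Polynomial.C (Polynomial.C (coeff t q)) from rfl]
      ring
    rw [e1, Polynomial.coeff_C_mul_X_pow]
    by_cases h1 : s 0 + s 1 = t 0 + t 1
    · rw [if_pos h1, Polynomial.coeff_C_mul_X_pow]
      simp [h1]
    · rw [if_neg h1, if_neg (fun h => h1 h.1), Polynomial.coeff_zero]
  rw [Finset.sum_congr rfl fun t _ => key t, Finset.sum_eq_single s]
  · simp
  · intro t _ hts
    rw [if_neg]
    rintro ⟨h1, h2⟩
    apply hts
    ext i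
    fin_cases i
    · show t 0 = s 0
      omega
    · exact h2.symm
  · intro hs
    simpa using hs

lemma supp_of_deg {q : k0 K} {e : ℤ} (hq : ∀ l : ℕ, e < l → (sigma0 K q).coeff l = 0) :
    ∀ s ∈ q.support, (s 0 : ℤ) + s 1 ≤ e := by
  intro s hs
  by_contra hcon
  have h1 : Polynomial.mapAlgHom (aeval ![0, Polynomial.X] : k0 K →ₐ[K] Polynomial K)
      (sigma0 K q) = (aeval ![Polynomial.X, Polynomial.C Polynomial.X * Polynomial.X] :
      k0 K →ₐ[K] Polynomial (Polynomial K)) q := by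
    have : (Polynomial.mapAlgHom (aeval ![0, Polynomial.X] : k0 K →ₐ[K] Polynomial K)).comp
      (sigma0 K) = aeval ![Polynomial.X, Polynomial.C Polynomial.X * Polynomial.X] := by
      apply MvPolynomial.algHom_ext
      intro i
      fin_cases i <;> simp [sigma0]
    exact congrArg (fun g => g q) this
  have h2 := kappa_coeff K q s
  rw [← h1, Polynomial.coe_mapAlgHom, Polynomial.coeff_map, hq _ (by push_cast; omega)] at h2
  exact (mem_support_iff.1 hs) (by rw [← h2]; simp)

lemma dvd_deg {A : Type*} [CommRing A] [IsDomain A] {g p : Polynomial A} (hg : g ≠ 0) {r : ℤ}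
    (h : ∀ l : ℕ, r < l → (g * p).coeff l = 0) (l : ℕ) (hl : r < l) : p.coeff l = 0 := by
  by_cases hp : p = 0
  · simp [hp]
  · apply Polynomial.coeff_eq_zero_of_natDegree_lt
    have h1 := Polynomial.natDegree_mul hg hp
    have h2 : ((g * p).natDegree : ℤ) ≤ r := by
      by_contra hcon
      have := h (g * p).natDegree (by omega)
      exact mul_ne_zero hg hp (Polynomial.leadingCoeff_eq_zero.1 this)
    omega

end Generic
end GM
end

noncomputable section
namespace GM
section Final

lemma prim {A : Type*} [CommRing A] [IsDomain A] [UniqueFactorizationMonoid A] {N : ℕ}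
    (u : Fin N → A) (hu : u ≠ 0) : ∃ d : A, ∃ v : Fin N → A, d ≠ 0 ∧ (∀ i, u i = d * v i) ∧
      ∀ x y, (∀ i, x ∣ y * v i) → x ∣ y := by
  classical
  letI : StrongNormalizationMonoid A := UniqueFactorizationMonoid.strongNormalizationMonoid
  letI : NormalizedGCDMonoid A := UniqueFactorizationMonoid.toNormalizedGCDMonoid A
  obtain ⟨i0, hi0⟩ := Function.ne_iff.1 hu
  obtain ⟨v, hv, hg⟩ := Finset.extract_gcd u (s := Finset.univ) ⟨i0, Finset.mem_univ _⟩
  refine ⟨Finset.univ.gcd u, v, ?_, fun i => hv i (Finset.mem_univ _), ?_⟩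
  · intro h
    apply hi0
    rw [hv i0 (Finset.mem_univ _), h, zero_mul]
    rfl
  · intro x y h
    have h1 : x ∣ Finset.univ.gcd (fun i => y * v i) := Finset.dvd_gcd fun i _ => h i
    have h2 := (Finset.gcd_mul_left' Finset.univ v y).dvd
    rw [hg, mul_one] at h2
    exact h1.trans h2

variable {K : Type*} [Field K] {n : ℕ} {a : Fin (n + 2) → ℤ} {b : Fin n → ℤ}
    {Φ : Matrix (Fin n) (Fin (n + 2)) (MvPolynomial (Fin 3) K)} {m : ℤ}

lemma rho_mulVec {A : Type*} [CommRing A] [Algebra K A] (c : Fin 3 → A)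
    (f : Fin (n + 2) → MvPolynomial (Fin 3) K) :
    (Φ.map (rho K c)).mulVec (fun i => rho K c (f i)) = fun j => rho K c (Φ.mulVec f j) := by
  ext1 j
  simp only [Matrix.mulVec, dotProduct, Matrix.map_apply, map_sum, map_mul]

lemma degB (hΦ : ∀ j i, homog (Φ j i) (a i - b j)) (c : Fin 3 → K) :
    DegB a b (Φ.map (rho K c)) := fun j i l hl => rho_deg c (hΦ j i) l hl

lemma lift_PB {N : ℕ} {a : Fin N → ℤ} {c : Fin 3 → K} (hc : c 2 ≠ 0) {e : ℤ}
    {g : Fin N → Polynomial K} (hg : g ∈ PB K N a e) :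
    ∃ w ∈ degPiece (K := K) N a e, (fun i => rho K c (w i)) = g := by
  choose w hw hw' using fun i => rho_lift hc (hg i)
  exact ⟨w, mem_degPiece.2 hw, funext hw'⟩

lemma rho_PB {N : ℕ} {a : Fin N → ℤ} {A : Type*} [CommRing A] [Algebra K A] (c : Fin 3 → A)
    {e : ℤ} {w : Fin N → MvPolynomial (Fin 3) K} (hw : w ∈ degPiece (K := K) N a e) :
    (fun i => rho K c (w i)) ∈ PB A N a e := fun i l hl => rho_deg c (mem_degPiece.1 hw i) l hl

lemma fc (hfin : FiniteColength n a b Φ) {c : Fin 3 → K} (hc : c 2 ≠ 0) :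
    FC a b (Φ.map (rho K c)) := by
  obtain ⟨D, hD⟩ := hfin
  refine ⟨D, fun d hd g hg => ?_⟩
  obtain ⟨w, hw, rfl⟩ := lift_PB hc hg
  obtain ⟨f, hf, hfw⟩ := hD d hd hw
  refine ⟨_, rho_PB c hf, ?_⟩
  rw [psi_apply, rho_mulVec]
  ext1 j
  rw [← hfw]
  rfl

lemma DD_rho (p : MvPolynomial (Fin 3) K) : DD K (rho K (cgen K) p) = 0 := by
  rw [DD, tau_rho, Polynomial.derivative_C, map_zero]

lemma DD_sum {ι : Type*} (s : Finset ι) (f : ι → BB K) :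
    DD K (∑ i ∈ s, f i) = ∑ i ∈ s, DD K (f i) := by simp [DD]

lemma DD_ker {v : Fin (n + 2) → BB K} (hv : (Φ.map (rho K (cgen K))).mulVec v = 0) :
    (Φ.map (rho K (cgen K))).mulVec (fun i => DD K (v i)) = 0 := by
  ext1 j
  have h := congrArg (DD K) (congrFun hv j)
  rw [Matrix.mulVec, dotProduct, DD_sum] at h
  simp only [DD_mul, Matrix.map_apply, DD_rho, zero_mul, zero_add] at h
  rw [Matrix.mulVec, dotProduct]
  simp only [Matrix.map_apply]
  rw [h]
  simp [DD]

lemma spec_KK {σ : Type*} (c : Fin 3 → MvPolynomial σ K) (γ : σ → K) {e : ℤ}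
    {v : Fin (n + 2) → Polynomial (MvPolynomial σ K)} (hv : v ∈ PB _ (n + 2) a e)
    (hv0 : (Φ.map (rho K c)).mulVec v = 0) :
    (fun i => Polynomial.map (eval γ) (v i)) ∈ KK a (Φ.map (rho K (fun i => eval γ (c i)))) e := by
  refine ⟨fun i l hl => ?_, ?_⟩
  · rw [Polynomial.coeff_map, hv i l hl, map_zero]
  · rw [SetLike.mem_coe, LinearMap.mem_ker, psi_apply]
    ext1 j
    have h := congrArg (Polynomial.map (eval γ)) (congrFun hv0 j)
    have h2 := RingHom.map_mulVec (Polynomial.mapRingHom (eval γ)) (Φ.map (rho K c)) v j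
    rw [Polynomial.coe_mapRingHom, h] at h2
    have h3 : (Φ.map (rho K c)).map (Polynomial.map (eval γ)) =
        Φ.map (rho K (fun i => eval γ (c i))) := by
      ext1 j i
      exact rho_map (aeval γ : MvPolynomial σ K →ₐ[K] K) c (Φ j i)
    rw [h3] at h2
    exact h2.symm.trans (Polynomial.map_zero _)

lemma Tm_spec {σ : Type*} (c : Fin 3 → MvPolynomial σ K) (γ : σ → K) (e : ℤ) (N : ℕ) :
    (Tm a e N (Φ.map (rho K c))).map (eval γ) =
      Tm a e N (Φ.map (rho K (fun i => eval γ (c i)))) := by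
  rw [← Tm_map]
  congr 1
  ext1 j i
  exact rho_map (aeval γ : MvPolynomial σ K →ₐ[K] K) c (Φ j i)

lemma HN_spec {σ : Type*} (c : Fin 3 → MvPolynomial σ K) (γ : σ → K) {e : ℤ} {N : ℕ}
    (h : HN a e N (Φ.map (rho K c))) :
    HN a e N (Φ.map (rho K (fun i => eval γ (c i)))) := by
  have h3 : (Φ.map (rho K c)).map (Polynomial.map (eval γ)) =
      Φ.map (rho K (fun i => eval γ (c i))) := by
    ext1 j i
    exact rho_map (aeval γ : MvPolynomial σ K →ₐ[K] K) c (Φ j i)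
  rw [← h3]
  exact HN_map _ h

lemma KK_bot_iff {e : ℤ} {Ψ : Matrix (Fin n) (Fin (n + 2)) (Polynomial K)} :
    KK a Ψ e = ⊥ ↔ ∀ u ∈ PB K (n + 2) a e, Ψ.mulVec u = 0 → u = 0 := by
  rw [Submodule.eq_bot_iff]
  constructor
  · intro h u hu h0
    exact h u ⟨hu, h0⟩
  · rintro h u ⟨hu, h0⟩
    exact h u hu h0

theorem generic [CharZero K]
    (hΦ : ∀ j i, homog (Φ j i) (a i - b j)) (hfin : FiniteColength n a b Φ)
    (hm : (∑ i, a i) - (∑ j, b j) = 2 * m) (hstable : Nd n a Φ m = ⊥) :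
    ∀ u ∈ PB (k0 K) (n + 2) a (m - 1), (Φ.map (rho K (cgen K))).mulVec u = 0 → u = 0 := by
  haveI : Infinite K := inferInstance
  intro u hu hu0
  by_contra hne
  obtain ⟨d, v, hd, hdv, hprim⟩ := prim u hne
  have hv : v ∈ PB (k0 K) (n + 2) a (m - 1) := fun i l hl =>
    dvd_deg hd (fun l' hl' => by rw [← hdv]; exact hu i l' hl') l hl
  have hv0 : (Φ.map (rho K (cgen K))).mulVec v = 0 := by
    have h : u = d • v := funext hdv
    rw [h, Matrix.mulVec_smul] at hu0
    exact (smul_eq_zero.1 hu0).resolve_left hd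
  have hw : (fun i => DD K (v i)) ∈ PB (k0 K) (n + 2) a m := fun i l hl =>
    DD_deg K (e := m - 1 - a i) (hv i) l (by omega)
  have hw0 := DD_ker hv0
  have hpr : ∀ i j, v i * DD K (v j) = v j * DD K (v i) := by
    intro i j
    ext1 l
    apply MvPolynomial.funext
    intro γ
    have hc : (fun i => eval γ (cgen K i)) 2 ≠ 0 := by simp [cgen]
    have h := dep (degB hΦ _) (fc hfin hc) hm (spec_KK (cgen K) γ hv hv0)
      (spec_KK (cgen K) γ hw hw0) (by omega) i j
    have h2 := congrArg (fun p => Polynomial.coeff p l) h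
    simp only [← Polynomial.map_mul, Polynomial.coeff_map] at h2
    exact h2
  have hconst : ∀ j, ∃ q : k0 K, tau K (v j) = Polynomial.C q := by
    intro j
    have h1 : v j ∣ DD K (v j) := by
      apply hprim
      intro i
      rw [mul_comm, hpr i j]
      exact dvd_mul_right _ _
    have h2 : tau K (v j) ∣ Polynomial.derivative (tau K (v j)) := by
      have := map_dvd (tau K) h1
      rwa [DD, tau_sigma] at this
    have h3 : Polynomial.derivative (tau K (v j)) = 0 := by
      by_cases hz : tau K (v j) = 0
      · simp [hz]
      · exact Polynomial.eq_zero_of_dvd_of_degree_lt h2 (Polynomial.degree_derivative_lt hz)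
    exact ⟨_, Polynomial.eq_C_of_natDegree_eq_zero (Polynomial.derivative_eq_zero.1 h3)⟩
  choose q hq using hconst
  have hvq : ∀ j, v j = sigma0 K (q j) := by
    intro j
    rw [← sigma_tau K (v j), hq, sigma_C]
  have hlift : ∀ j, ∃ p, homog p (m - 1 - a j) ∧ theta K p = q j := by
    intro j
    apply theta_lift
    apply supp_of_deg
    intro l hl
    rw [← hvq]
    exact hv j l hl
  choose p hp hpq using hlift
  have hker : Φ.mulVec p = 0 := by
    ext1 j
    have hh : homog (Φ.mulVec p j) (m - 1 - b j) := by
      rw [Matrix.mulVec, dotProduct]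
      apply homog_sum
      intro i _
      have := (hΦ j i).mul (hp i)
      rwa [show a i - b j + (m - 1 - a i) = m - 1 - b j by ring] at this
    refine theta_inj hh ?_
    apply Polynomial.C_injective
    have h := congrArg (tau K) (congrFun hv0 j)
    rw [Matrix.mulVec, dotProduct, map_sum] at h
    simp only [Matrix.map_apply, map_mul, tau_rho, hq] at h
    rw [Matrix.mulVec, dotProduct]
    simp only [map_sum, map_mul, hpq]
    rw [h]
    simp
  have hX : (X 0 : MvPolynomial (Fin 3) K) • p ∈ Nd n a Φ m := by
    refine ⟨mem_degPiece.2 fun i => ?_, ?_⟩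
    · have hX : homog (X 0 : MvPolynomial (Fin 3) K) 1 :=
        isWeightedHomogeneous_X K (fun _ : Fin 3 => (1 : ℤ)) 0
      have := hX.mul (hp i)
      rwa [show 1 + (m - 1 - a i) = m - a i by ring] at this
    · rw [SetLike.mem_coe, LinearMap.mem_ker]
      show Φ.mulVec _ = 0
      rw [Matrix.mulVec_smul, hker, smul_zero]
  rw [hstable, Submodule.mem_bot, smul_eq_zero] at hX
  have hp0 : p = 0 := hX.resolve_left (X_ne_zero 0)
  apply hne
  ext1 i
  rw [hdv, hvq, ← hpq, hp0]
  simp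

theorem open_line [CharZero K]
    (hΦ : ∀ j i, homog (Φ j i) (a i - b j)) (hfin : FiniteColength n a b Φ)
    (hm : (∑ i, a i) - (∑ j, b j) = 2 * m) (hstable : Nd n a Φ m = ⊥) :
    ∃ P : MvPolynomial (Fin 3) K, P ≠ 0 ∧ ∀ c : Fin 3 → K, eval c P ≠ 0 →
      c 2 ≠ 0 ∧ KK a (Φ.map (rho K c)) (m - 1) = ⊥ := by
  classical
  haveI : Infinite K := inferInstance
  obtain ⟨N, hN⟩ := exists_HN a (m - 1) (Φ.map (rho K (cgen K)))
  obtain ⟨γ, hγ⟩ := exists_spec _ ((inj_iff hN).2 (generic hΦ hfin hm hstable))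
  rw [Tm_spec] at hγ
  have h1 := (inj_iff (HN_spec _ γ hN)).1 hγ
  obtain ⟨N', hN'⟩ := exists_HN a (m - 1) (Φ.map (rho K (X : Fin 3 → MvPolynomial (Fin 3) K)))
  have hX : ∀ c : Fin 3 → K, (fun i => eval c (X i : MvPolynomial (Fin 3) K)) = c := by
    intro c; ext1 i; simp
  have h2 := (inj_iff (HN_spec _ (fun i => eval γ (cgen K i)) hN')).2 (by rw [hX]; exact h1)
  rw [← Tm_spec] at h2
  obtain ⟨P, hP, hPc⟩ := open_inj _ _ h2
  refine ⟨P * X 2, mul_ne_zero hP (X_ne_zero 2), fun c hc => ?_⟩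
  rw [map_mul, eval_X] at hc
  refine ⟨right_ne_zero_of_mul hc, ?_⟩
  have h3 := hPc c (left_ne_zero_of_mul hc)
  rw [Tm_spec] at h3
  have h4 := (inj_iff (HN_spec _ c hN')).1 h3
  rw [hX] at h4
  exact KK_bot_iff.2 h4

lemma divL_vec [Infinite K] {N : ℕ} {a : Fin N → ℤ} {c : Fin 3 → K} (hc : c 2 ≠ 0) {d : ℤ}
    {f : Fin N → MvPolynomial (Fin 3) K} (hf : f ∈ degPiece (K := K) N a d)
    (h0 : (fun i => rho K c (f i)) = 0) :
    ∃ f' ∈ degPiece (K := K) N a (d - 1), f = linform c • f' := by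
  choose f' h1 h2 using fun i => divL hc (mem_degPiece.1 hf i) (congrFun h0 i)
  refine ⟨f', mem_degPiece.2 fun i => ?_, funext h2⟩
  have := h1 i
  rwa [show d - a i - 1 = d - 1 - a i by ring] at this

lemma linform_ne {c : Fin 3 → K} (hc : c 2 ≠ 0) : linform c ≠ 0 := by
  intro h
  have := congrArg (eval ![0, 0, 1]) h
  simp [linform, Fin.sum_univ_three] at this
  exact hc this

lemma phi_mem (hΦ : ∀ j i, homog (Φ j i) (a i - b j)) {d : ℤ}
    {f : Fin (n + 2) → MvPolynomial (Fin 3) K} (hf : f ∈ degPiece (K := K) (n + 2) a d) :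
    phiK n Φ f ∈ degPiece (K := K) n b d := by
  rw [mem_degPiece] at hf ⊢
  intro j
  show homog (Φ.mulVec f j) _
  rw [Matrix.mulVec, dotProduct]
  apply homog_sum
  intro i _
  have := (hΦ j i).mul (hf i)
  rwa [show a i - b j + (d - a i) = d - b j by ring] at this

theorem inj_final [Infinite K] {c : Fin 3 → K} (hc : c 2 ≠ 0)
    (h0 : KK a (Φ.map (rho K c)) (m - 1) = ⊥) (d : ℤ) (hd : d ≤ m - 1) :
    Function.Injective (mulLmap n a b Φ (linform c) (homog_linform c) d) := by
  rw [← LinearMap.ker_eq_bot, LinearMap.ker_eq_bot']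
  intro x hx
  obtain ⟨⟨w, hw⟩, rfl⟩ := Submodule.Quotient.mk_surjective _ x
  rw [mulLmap, Submodule.mapQ_apply, Submodule.Quotient.mk_eq_zero] at hx
  rw [Submodule.Quotient.mk_eq_zero]
  obtain ⟨f, hf, hfw⟩ := hx
  have hfw' : Φ.mulVec f = linform c • w := hfw
  have hr : (fun i => rho K c (f i)) = 0 := by
    have : (fun i => rho K c (f i)) ∈ KK a (Φ.map (rho K c)) (m - 1) := by
      refine KK_mono hd ⟨rho_PB c hf, ?_⟩
      rw [SetLike.mem_coe, LinearMap.mem_ker, psi_apply, rho_mulVec, hfw']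
      ext1 j
      have hL : rho K c (linform c) = 0 := by
        simp [rho, linform, Fin.sum_univ_three]
        ring
      simp [hL]
    rw [h0] at this
    exact (Submodule.mem_bot K).1 this
  obtain ⟨f', hf', rfl⟩ := divL_vec hc hf hr
  refine ⟨f', hf', ?_⟩
  rw [Matrix.mulVec_smul] at hfw'
  exact smul_right_injective _ (linform_ne hc) hfw'

theorem surj_final [Infinite K] (hΦ : ∀ j i, homog (Φ j i) (a i - b j))
    (hfin : FiniteColength n a b Φ)
    (hm : (∑ i, a i) - (∑ j, b j) = 2 * m) {c : Fin 3 → K} (hc : c 2 ≠ 0)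
    (h0 : KK a (Φ.map (rho K c)) (m - 1) = ⊥) (d : ℤ) (hd : m - 1 ≤ d) :
    Function.Surjective (mulLmap n a b Φ (linform c) (homog_linform c) d) := by
  intro x
  obtain ⟨⟨w, hw⟩, rfl⟩ := Submodule.Quotient.mk_surjective _ x
  obtain ⟨g, hg, hgw⟩ := surj (degB hΦ c) (fc hfin hc) hm h0 d hd _ (rho_PB c hw)
  obtain ⟨f, hf, rfl⟩ := lift_PB hc hg
  rw [psi_apply, rho_mulVec] at hgw
  obtain ⟨w', hw', he⟩ := divL_vec hc (sub_mem hw (phi_mem hΦ hf)) (by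
    ext1 i
    have := congrFun hgw i
    simp only [Pi.sub_apply, map_sub, Pi.zero_apply]
    rw [sub_eq_zero]
    exact this.symm)
  refine ⟨Submodule.Quotient.mk ⟨w', hw'⟩, ?_⟩
  rw [mulLmap, Submodule.mapQ_apply, Submodule.Quotient.eq]
  refine ⟨-f, neg_mem hf, ?_⟩
  rw [map_neg]
  show - phiK n Φ f = linform c • w' - w
  rw [← he]
  abel

end Final
end GM
end

/-- If `a - b` is even (`a - b = 2m`) and `N_m = 0` (the associated normalized
rank-2 bundle is stable with `c₁ = 0`), then for a general linear form `L` the multiplication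
map `×L : M_{d-1} → M_d` is injective for all `d ≤ m - 1` and surjective for all `d ≥ m - 1`. -/
theorem statement1 {K : Type*} [Field K] [IsAlgClosed K] [CharZero K]
    (n : ℕ) (a : Fin (n + 2) → ℤ) (b : Fin n → ℤ)
    (Φ : Matrix (Fin n) (Fin (n + 2)) (MvPolynomial (Fin 3) K))
    (hΦ : ∀ j i, homog (Φ j i) (a i - b j))
    (hfin : FiniteColength n a b Φ)
    (m : ℤ) (hm : (∑ i, a i) - (∑ j, b j) = 2 * m)
    (hstable : Nd n a Φ m = ⊥) :
    ∃ P : MvPolynomial (Fin 3) K, P ≠ 0 ∧ ∀ c : Fin 3 → K, eval c P ≠ 0 →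
      (∀ d : ℤ, d ≤ m - 1 →
        Function.Injective (mulLmap n a b Φ (linform c) (homog_linform c) d)) ∧
      (∀ d : ℤ, m - 1 ≤ d →
        Function.Surjective (mulLmap n a b Φ (linform c) (homog_linform c) d)) := by
  haveI : Infinite K := inferInstance
  obtain ⟨P, hP, h⟩ := GM.open_line hΦ hfin hm hstable
  refine ⟨P, hP, fun c hc => ?_⟩
  obtain ⟨h2, h0⟩ := h c hc
  exact ⟨fun d hd => GM.inj_final h2 h0 d hd, fun d hd => GM.surj_final hΦ hfin hm h2 h0 d hd⟩
end
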